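/- arXiv:1210.7602 — 2 statements merged into one kernel-verified Lean document; each statement's English description precedes it below -/
import Mathlib

section
/- Let w = Σ_{l=0}^{3} w^l be a graded form on ℝ³ with components in H¹_loc and let φ = Σ_{l=0}^{3} φ^l be a graded form with smooth compactly supported components. Then ∫⟨P(γ,μ,ω)^t w, P(γ,μ,ω)^t φ⟩dx = ∫[⟨δw, δφ⟩ + ⟨dw, dφ⟩ − ω²ε₀μ₀⟨w, φ⟩]dx + ⟨Q(γ,μ,ω)w, φ⟩, where P(γ,μ,ω)^t w is computed almost everywhere from the weak derivatives of w and dw, δw act degreewise. -/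
noncomputable section

open MeasureTheory Finset

namespace EMPaper

abbrev Pt (n : ℕ) := Fin n → ℝ
abbrev GF (n : ℕ) := Finset (Fin n) → ℂ
abbrev Form (n : ℕ) := Pt n → GF n

variable {n : ℕ}

def msgn (I J : Finset (Fin n)) : ℂ :=
  (-1 : ℂ) ^ (((I ×ˢ J).filter fun p => p.2 < p.1).card)

def wedge (u v : GF n) : GF n := fun S =>
  ∑ I ∈ S.powerset, msgn I (S \ I) * u I * v (S \ I)

def vee (v u : GF n) : GF n := fun I =>
  ∑ J ∈ (univ \ I).powerset, msgn I J * v J * u (I ∪ J)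

def ginner (u v : GF n) : ℂ := ∑ S : Finset (Fin n), u S * v S

def gconj (u : GF n) : GF n := fun S => (starRingEnd ℂ) (u S)

def proj (l : ℕ) (u : GF n) : GF n := fun S => if S.card = l then u S else 0

def IsGrade (l : ℕ) (u : GF n) : Prop := ∀ S : Finset (Fin n), S.card ≠ l → u S = 0

def dxe (j : Fin n) : GF n := fun S => if S = {j} then 1 else 0

def oneG (c : Fin n → ℂ) : GF n := fun S => ∑ j, if S = {j} then c j else 0

def altSign (u : GF n) : GF n := fun S => (-1 : ℂ) ^ S.card * u S

def gd (D : Fin n → GF n) : GF n := fun S => ∑ j, wedge (dxe j) (D j) S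

def gdel (D : Fin n → GF n) : GF n := fun S =>
  (-1 : ℂ) ^ (S.card + 1) * ∑ j, vee (dxe j) (D j) S

def pd (j : Fin n) (f : Pt n → ℂ) : Pt n → ℂ := fun x => fderiv ℝ f x (Pi.single j 1)

def Dcl (φ : Form n) : Fin n → Form n := fun j x S => pd j (fun y => φ y S) x

def IsTest (φ : Pt n → ℂ) : Prop := ContDiff ℝ (⊤ : ℕ∞) φ ∧ HasCompactSupport φ

def TestForm (φ : Form n) : Prop := ∀ S : Finset (Fin n), IsTest fun x => φ x S

def L2loc (f : Pt n → ℂ) : Prop :=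
  AEStronglyMeasurable f (volume : Measure (Pt n)) ∧
    ∀ K : Set (Pt n), IsCompact K → IntegrableOn (fun x => ‖f x‖ ^ 2) K volume

def HasWeakPD (j : Fin n) (f g : Pt n → ℂ) : Prop :=
  ∀ φ : Pt n → ℂ, IsTest φ → ∫ x, g x * φ x = -∫ x, f x * pd j φ x

def H1locWith (w : Form n) (Dw : Fin n → Form n) : Prop :=
  (∀ S : Finset (Fin n), L2loc fun x => w x S) ∧
    (∀ (j : Fin n) (S : Finset (Fin n)),
      HasWeakPD j (fun x => w x S) fun x => Dw j x S) ∧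
    ∀ (j : Fin n) (S : Finset (Fin n)), L2loc fun x => Dw j x S

/-! The three-dimensional electromagnetic setting. -/

/-- The data of the medium: frequency `ω`, constants `ε₀, μ₀` and `C¹` coefficients
`ε, σ, μ` with `ε ≥ ε₀ > 0`, `μ ≥ μ₀ > 0`, `σ ≥ 0`. -/
structure Coeffs where
  ω : ℝ
  ε₀ : ℝ
  μ₀ : ℝ
  εf : Pt 3 → ℝ
  σf : Pt 3 → ℝ
  μf : Pt 3 → ℝ
  hω : 0 < ω
  hε₀ : 0 < ε₀
  hμ₀ : 0 < μ₀
  hεC1 : ContDiff ℝ 1 εf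
  hσC1 : ContDiff ℝ 1 σf
  hμC1 : ContDiff ℝ 1 μf
  hεge : ∀ x, ε₀ ≤ εf x
  hμge : ∀ x, μ₀ ≤ μf x
  hσge : ∀ x, 0 ≤ σf x

namespace Coeffs

variable (C : Coeffs)

/-- `γ = ε + iσ/ω`. -/
def γ : Pt 3 → ℂ := fun x => (C.εf x : ℂ) + Complex.I * (C.σf x : ℂ) / (C.ω : ℂ)

/-- `a = (1/2) Log γ`. -/
def a : Pt 3 → ℂ := fun x => (1 / 2 : ℂ) * Complex.log (C.γ x)

/-- `b = (1/2) Log μ`. -/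
def b : Pt 3 → ℂ := fun x => (1 / 2 : ℂ) * Complex.log ((C.μf x : ℂ))

/-- `γ^{1/2} = e^a`. -/
def sg : Pt 3 → ℂ := fun x => Complex.exp (C.a x)

/-- `μ^{1/2} = e^b`. -/
def sm : Pt 3 → ℂ := fun x => Complex.exp (C.b x)

/-- The one-form `da`. -/
def da : Form 3 := fun x => oneG fun j => pd j C.a x

/-- The one-form `db`. -/
def db : Form 3 := fun x => oneG fun j => pd j C.b x

/-- The one-form `d(γ^{1/2} μ^{1/2})`. -/
def dsgm : Form 3 := fun x => oneG fun j => pd j (fun y => C.sg y * C.sm y) x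

/-- The zeroth order coefficient `iω γ^{1/2} μ^{1/2}`. -/
def c0 : Pt 3 → ℂ := fun x => Complex.I * (C.ω : ℂ) * C.sg x * C.sm x

end Coeffs

/-- The zeroth order part of `P(γ,μ,ω)` at a point, given the values `A = da`, `B = db`
and `c = iωγ^{1/2}μ^{1/2}` there:
`da∧v¹ + da∨(v¹+v³) + db∧(v⁰+v²) − db∨v² + iωγ^{1/2}μ^{1/2} v`. -/
def P0 (A B : GF 3) (c : ℂ) (v : GF 3) : GF 3 :=
  wedge A (proj 1 v) + vee A (proj 1 v + proj 3 v) + wedge B (proj 0 v + proj 2 v)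
    - vee B (proj 2 v) + c • v

/-- The zeroth order part of `P(γ,μ,ω)^t` at a point:
`db∧v¹ + db∨(v¹+v³) + da∧(v⁰+v²) − da∨v² + iωγ^{1/2}μ^{1/2} v`. -/
def P0t (A B : GF 3) (c : ℂ) (v : GF 3) : GF 3 :=
  wedge B (proj 1 v) + vee B (proj 1 v + proj 3 v) + wedge A (proj 0 v + proj 2 v)
    - vee A (proj 2 v) + c • v

/-- `P(γ,μ,ω)v` at a point, computed from the partial derivatives `D j = ∂_j v`. -/
def Pfull (A B : GF 3) (c : ℂ) (D : Fin 3 → GF 3) (v : GF 3) : GF 3 :=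
  (gd fun j => altSign (D j)) + (gdel fun j => altSign (D j)) + P0 A B c v

/-- `P(γ,μ,ω)^t v` at a point, computed from the partial derivatives `D j = ∂_j v`. -/
def Ptfull (A B : GF 3) (c : ℂ) (D : Fin 3 → GF 3) (v : GF 3) : GF 3 :=
  -((gd fun j => altSign (D j)) + (gdel fun j => altSign (D j))) + P0t A B c v

/-- `v` is a weak solution of `P(γ,μ,ω)v = 0` on `ℝ³`. -/
def IsWeakSolP (C : Coeffs) (v : Form 3) : Prop :=
  ∀ φ : Form 3, TestForm φ →
    (∫ x, ginner (altSign (v x))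
        ((gd fun j => Dcl φ j x) + gdel fun j => Dcl φ j x))
      + (∫ x, ginner (P0 (C.da x) (C.db x) (C.c0 x) (v x)) (φ x)) = 0

/-- `v` is a weak solution of `P(γ,μ,ω)^t v = 0` on `ℝ³`. -/
def IsWeakSolPt (C : Coeffs) (v : Form 3) : Prop :=
  ∀ φ : Form 3, TestForm φ →
    (∫ x, ginner (-altSign (v x))
        ((gd fun j => Dcl φ j x) + gdel fun j => Dcl φ j x))
      + (∫ x, ginner (P0t (C.da x) (C.db x) (C.c0 x) (v x)) (φ x)) = 0

/-- The components of the Hodge star of the 2-form part: `∗(dx²∧dx³) = dx¹`,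
`∗(dx³∧dx¹) = dx²`, `∗(dx¹∧dx²) = dx³`. -/
def star2 (u : GF 3) : Fin 3 → ℂ := fun k =>
  if k = 0 then u {1, 2} else if k = 1 then -u {0, 2} else u {0, 1}

/-- `⟨c, D*(u⊙v)⟩` for 1-forms with components `u, v` and partial derivatives
`du j k = ∂_j u_k`, `dv j k = ∂_j v_k`, where
`D*(u⊙v) = −Σ_k (Σ_j ∂_j(u_j v_k + u_k v_j)) dx^k`. -/
def dstarPair (c u v : Fin 3 → ℂ) (du dv : Fin 3 → Fin 3 → ℂ) : ℂ :=
  ∑ k, c k * (-(∑ j, (du j j * v k + u j * dv j k + du j k * v j + u k * dv j j)))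

/-- The pairing `⟨Q(γ,μ,ω)w, φ⟩`, where `Dw` is the family of weak partial derivatives
of `w` and `φ` is a smooth compactly supported graded form.  The weak derivatives of the
scalar products and of the symmetric tensor products appearing in `Q` are expanded by
the Leibniz rule. -/
def Qpair (C : Coeffs) (w : Form 3) (Dw : Fin 3 → Form 3) (φ : Form 3) : ℂ :=
  -(∫ x, (C.ω : ℂ) ^ 2 * (C.γ x * (C.μf x : ℂ) - ((C.ε₀ * C.μ₀ : ℝ) : ℂ))
      * ginner (w x) (φ x))
  + (∫ x, ginner ((2 * Complex.I * (C.ω : ℂ)) •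
      (vee (C.dsgm x) (proj 1 (w x) + proj 3 (w x))
        + wedge (C.dsgm x) (proj 0 (w x) + proj 2 (w x)))) (φ x))
  + (∫ x, ginner (C.da x) (C.da x)
        * ginner (proj 0 (w x) + proj 2 (w x)) (proj 0 (φ x) + proj 2 (φ x))
      + ginner (C.db x) (C.db x)
        * ginner (proj 1 (w x) + proj 3 (w x)) (proj 1 (φ x) + proj 3 (φ x)))
  + (∫ x,
      (∑ j, pd j C.a x *
        (ginner (proj 2 (Dw j x) - proj 0 (Dw j x)) (proj 0 (φ x) + proj 2 (φ x))
          + ginner (proj 2 (w x) - proj 0 (w x)) (proj 0 (Dcl φ j x) + proj 2 (Dcl φ j x))))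
      + ∑ j, pd j C.b x *
        (ginner (proj 1 (Dw j x) - proj 3 (Dw j x)) (proj 1 (φ x) + proj 3 (φ x))
          + ginner (proj 1 (w x) - proj 3 (w x)) (proj 1 (Dcl φ j x) + proj 3 (Dcl φ j x))))
  + (∫ x, dstarPair (fun k => pd k C.b x) (fun j => w x {j}) (fun j => φ x {j})
      (fun j k => Dw j x {k}) (fun j k => Dcl φ j x {k}))
  + (∫ x, dstarPair (fun k => pd k C.a x) (star2 (w x)) (star2 (φ x))
      (fun j k => star2 (Dw j x) k) (fun j k => star2 (Dcl φ j x) k))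

/-- The pairing `⟨Q̃(γ,μ,ω)w, φ⟩`. -/
def Qtpair (C : Coeffs) (w : Form 3) (Dw : Fin 3 → Form 3) (φ : Form 3) : ℂ :=
  -(∫ x, (C.ω : ℂ) ^ 2 * (C.γ x * (C.μf x : ℂ) - ((C.ε₀ * C.μ₀ : ℝ) : ℂ))
      * ginner (w x) (φ x))
  + (∫ x, ginner ((-(2 * Complex.I * (C.ω : ℂ))) • vee (C.dsgm x) (proj 2 (w x))
      + (2 * Complex.I * (C.ω : ℂ)) • wedge (C.dsgm x) (proj 1 (w x))) (φ x))
  + (∫ x, ginner (C.db x) (C.db x)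
        * ginner (proj 0 (w x) + proj 2 (w x)) (proj 0 (φ x) + proj 2 (φ x))
      + ginner (C.da x) (C.da x)
        * ginner (proj 1 (w x) + proj 3 (w x)) (proj 1 (φ x) + proj 3 (φ x)))
  + (∫ x,
      (∑ j, pd j C.b x *
        (ginner (proj 0 (Dw j x) - proj 2 (Dw j x)) (proj 0 (φ x) + proj 2 (φ x))
          + ginner (proj 0 (w x) - proj 2 (w x)) (proj 0 (Dcl φ j x) + proj 2 (Dcl φ j x))))
      + ∑ j, pd j C.a x *
        (ginner (proj 3 (Dw j x) - proj 1 (Dw j x)) (proj 1 (φ x) + proj 3 (φ x))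
          + ginner (proj 3 (w x) - proj 1 (w x)) (proj 1 (Dcl φ j x) + proj 3 (Dcl φ j x))))
  - (∫ x, dstarPair (fun k => pd k C.a x) (fun j => w x {j}) (fun j => φ x {j})
      (fun j k => Dw j x {k}) (fun j k => Dcl φ j x {k}))
  - (∫ x, dstarPair (fun k => pd k C.b x) (star2 (w x)) (star2 (φ x))
      (fun j k => star2 (Dw j x) k) (fun j k => star2 (Dcl φ j x) k))

/-- The pairing `⟨q̃(γ,μ,ω)(v⁰+v³), φ⟩` for `φ = φ⁰ + φ³`, where `Dv` is the family of
weak partial derivatives of `v`. -/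
def qtPair (C : Coeffs) (v : Form 3) (Dv : Fin 3 → Form 3) (φ : Form 3) : ℂ :=
  -(∫ x, (C.ω : ℂ) ^ 2 * (C.γ x * (C.μf x : ℂ) - ((C.ε₀ * C.μ₀ : ℝ) : ℂ))
      * ginner (proj 0 (v x) + proj 3 (v x)) (φ x))
  + ∫ x, ginner (C.db x) (C.db x) * (v x ∅ * φ x ∅)
      + ginner (C.da x) (C.da x) * (v x univ * φ x univ)
      + (∑ j, pd j C.b x * (Dv j x ∅ * φ x ∅ + v x ∅ * Dcl φ j x ∅))
      + ∑ j, pd j C.a x * (Dv j x univ * φ x univ + v x univ * Dcl φ j x univ)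

open Filter Topology in
lemma approx0 (f : Pt n → ℂ) (hf : ContDiff ℝ 1 f) (hc : HasCompactSupport f) :
    ∃ (F : ℕ → Pt n → ℂ) (M : ℝ), (∀ m, ContDiff ℝ (⊤ : ℕ∞) (F m)) ∧ (∀ m x, ‖F m x‖ ≤ M) ∧
      (∀ m j x, ‖pd j (F m) x‖ ≤ M) ∧ (∀ x, Tendsto (fun m => F m x) atTop (𝓝 (f x))) ∧
      ∀ j x, Tendsto (fun m => pd j (F m) x) atTop (𝓝 (pd j f x)) := by
  let ψ : ℕ → ContDiffBump (0 : Pt n) := fun m =>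
    ⟨1 / (2 * ((m : ℝ) + 1)), 1 / ((m : ℝ) + 1), by positivity, by
      have : (0 : ℝ) ≤ m := by positivity
      apply one_div_lt_one_div_of_lt
      · positivity
      · linarith⟩
  have hψ : Tendsto (fun m => (ψ m).rOut) atTop (𝓝 0) := tendsto_one_div_add_atTop_nhds_zero_nat
  let F : ℕ → Pt n → ℂ := fun m =>
    MeasureTheory.convolution ((ψ m).normed volume) f (ContinuousLinearMap.lsmul ℝ ℝ) volume
  have hpdc : ∀ j, Continuous (pd j f) := fun j =>
    (hf.continuous_fderiv (by norm_num)).clm_apply continuous_const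
  have hpds : ∀ j, HasCompactSupport (pd j f) := fun j => by
    have := hc.fderiv (𝕜 := ℝ)
    exact this.comp_left (g := fun L : Pt n →L[ℝ] ℂ => L (Pi.single j 1)) rfl
  have hpd : ∀ m j, pd j (F m) = MeasureTheory.convolution ((ψ m).normed volume) (pd j f)
      (ContinuousLinearMap.lsmul ℝ ℝ) volume := by
    intro m j
    funext x
    have h := hc.hasFDerivAt_convolution_right (ContinuousLinearMap.lsmul ℝ ℝ) (μ := volume)
      (f := (ψ m).normed volume) ((ψ m).continuous_normed.locallyIntegrable) hf x
    unfold pd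
    rw [h.fderiv]
    rw [convolution_precompR_apply]
    · exact (ψ m).continuous_normed.locallyIntegrable
    · exact hc.fderiv (𝕜 := ℝ)
    · exact hf.continuous_fderiv (by norm_num)
  have bnd : ∀ g : Pt n → ℂ, Continuous g → HasCompactSupport g → ∃ M, 0 ≤ M ∧ ∀ m x,
      ‖MeasureTheory.convolution ((ψ m).normed volume) g
      (ContinuousLinearMap.lsmul ℝ ℝ) volume x‖ ≤ M := by
    intro g hg hgs
    obtain ⟨M, hM⟩ := hg.bounded_above_of_compact_support hgs
    have hM0 : 0 ≤ M := (norm_nonneg _).trans (hM 0)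
    refine ⟨3 * M, by positivity, fun m x => ?_⟩
    have := (ψ m).dist_normed_convolution_le (μ := volume) (g := g) (x₀ := x) (ε := 2 * M)
      hg.aestronglyMeasurable (fun y _ => by
        rw [dist_eq_norm]
        have := norm_sub_le (g y) (g x)
        linarith [hM y, hM x])
    rw [dist_eq_norm] at this
    have h2 := norm_sub_norm_le (MeasureTheory.convolution ((ψ m).normed volume) g
      (ContinuousLinearMap.lsmul ℝ ℝ) volume x) (g x)
    linarith [hM x]
  have lim : ∀ g : Pt n → ℂ, Continuous g → ∀ x, Tendsto (fun m =>
      MeasureTheory.convolution ((ψ m).normed volume) g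
      (ContinuousLinearMap.lsmul ℝ ℝ) volume x) atTop (𝓝 (g x)) := fun g hg x =>
    ContDiffBump.convolution_tendsto_right_of_continuous hψ hg x
  obtain ⟨M0, hM0, hM⟩ := bnd f hf.continuous hc
  choose Mj hMj0 hMj using fun j => bnd (pd j f) (hpdc j) (hpds j)
  have hs : 0 ≤ ∑ j, Mj j := Finset.sum_nonneg fun j _ => hMj0 j
  refine ⟨F, M0 + ∑ j, Mj j, ?_, ?_, ?_, lim f hf.continuous, ?_⟩
  · intro m
    exact (ψ m).hasCompactSupport_normed.contDiff_convolution_left _ (ψ m).contDiff_normed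
      hf.continuous.locallyIntegrable
  · intro m x
    linarith [hM m x]
  · intro m j x
    rw [hpd]
    have := Finset.single_le_sum (f := Mj) (fun j _ => hMj0 j) (Finset.mem_univ j)
    linarith [hMj j m x]
  · intro j x
    simp only [hpd]
    exact lim _ (hpdc j) x

open Filter Topology in
lemma approx1 (f : Pt n → ℂ) (hf : ContDiff ℝ 1 f) (K : Set (Pt n)) (hK : IsCompact K) :
    ∃ (F : ℕ → Pt n → ℂ) (M : ℝ), (∀ m, ContDiff ℝ (⊤ : ℕ∞) (F m)) ∧ (∀ m x, ‖F m x‖ ≤ M) ∧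
      (∀ m j x, ‖pd j (F m) x‖ ≤ M) ∧ (∀ x ∈ K, Tendsto (fun m => F m x) atTop (𝓝 (f x))) ∧
      ∀ j, ∀ x ∈ K, Tendsto (fun m => pd j (F m) x) atTop (𝓝 (pd j f x)) := by
  obtain ⟨R, hR⟩ := hK.isBounded.subset_ball (0 : Pt n)
  let χ : ContDiffBump (0 : Pt n) := ⟨max R 1, max R 1 + 1, by positivity, by linarith⟩
  have hχ : ∀ x ∈ K, (fun y => χ y • f y) =ᶠ[𝓝 x] f := by
    intro x hx
    have h1 : Metric.ball (0 : Pt n) (max R 1) ∈ 𝓝 x :=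
      Metric.isOpen_ball.mem_nhds (Metric.ball_subset_ball (le_max_left _ _) (hR hx))
    filter_upwards [h1] with y hy
    rw [χ.one_of_mem_closedBall (Metric.ball_subset_closedBall hy), one_smul]
  obtain ⟨F, M, h1, h2, h3, h4, h5⟩ := approx0 (fun y => χ y • f y)
    (χ.contDiff.smul hf) (χ.hasCompactSupport.smul_right)
  refine ⟨F, M, h1, h2, h3, fun x hx => ?_, fun j x hx => ?_⟩
  · have := h4 x
    rwa [(hχ x hx).eq_of_nhds] at this
  · have := h5 j x
    unfold pd at this ⊢
    rwa [(hχ x hx).fderiv_eq] at this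

lemma pd_zero_of_notMem {φ : Pt n → ℂ} {x : Pt n} (hx : x ∉ tsupport φ) (j : Fin n) :
    pd j φ x = 0 := by
  unfold pd
  rw [fderiv_of_notMem_tsupport (𝕜 := ℝ) hx]; rfl

lemma isTest_pd {φ : Pt n → ℂ} (h : IsTest φ) (j : Fin n) : IsTest (pd j φ) := by
  refine ⟨?_, ?_⟩
  · exact (h.1.fderiv_right (m := (⊤ : ℕ∞)) (by simp)).clm_apply contDiff_const
  · have := h.2.fderiv (𝕜 := ℝ)
    exact this.comp_left (g := fun L : Pt n →L[ℝ] ℂ => L (Pi.single j 1)) rfl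

lemma isTest_mul {φ f : Pt n → ℂ} (h : IsTest φ) (hf : ContDiff ℝ (⊤ : ℕ∞) f) :
    IsTest (fun x => f x * φ x) := ⟨hf.mul h.1, h.2.mul_left⟩

lemma pd_mul {f g : Pt n → ℂ} {x : Pt n} (hf : DifferentiableAt ℝ f x)
    (hg : DifferentiableAt ℝ g x) (j : Fin n) :
    pd j (fun y => f y * g y) x = f x * pd j g x + pd j f x * g x := by
  unfold pd
  rw [show (fun y => f y * g y) = f * g from rfl, fderiv_mul hf hg]
  simp [mul_comm]

lemma pd_comm {f : Pt n → ℂ} (hf : ContDiff ℝ (⊤ : ℕ∞) f) (j k : Fin n) (x : Pt n) :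
    pd j (pd k f) x = pd k (pd j f) x := by
  have h2 : (2 : WithTop ℕ∞) ≤ ((⊤ : ℕ∞) : WithTop ℕ∞) :=
    WithTop.coe_le_coe.2 (le_top (a := (2 : ℕ∞)))
  have hs : IsSymmSndFDerivAt ℝ f x :=
    (hf.of_le h2).contDiffAt.isSymmSndFDerivAt (by simp)
  have hd : DifferentiableAt ℝ (fderiv ℝ f) x :=
    (((hf.of_le h2).fderiv_right (m := 1) (by norm_num)).differentiable (by norm_num)) x
  have key : ∀ a b : Fin n, pd a (pd b f) x
      = fderiv ℝ (fderiv ℝ f) x (Pi.single a 1) (Pi.single b 1) := by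
    intro a b
    unfold pd
    rw [fderiv_clm_apply hd (differentiableAt_const _)]
    simp
  rw [key, key]
  exact hs.eq _ _

lemma L2loc.li {f : Pt n → ℂ} (h : L2loc f) : LocallyIntegrable f volume := by
  rw [locallyIntegrable_iff]
  intro K hK
  have h2 : MemLp f 2 (volume.restrict K) := by
    rw [memLp_two_iff_integrable_sq_norm h.1.restrict]
    exact h.2 K hK
  have : IsFiniteMeasure (volume.restrict K) := ⟨by
    rw [Measure.restrict_apply_univ]; exact hK.measure_lt_top⟩
  exact h2.integrable (by norm_num)

lemma li_mul {f g : Pt n → ℂ} (h : LocallyIntegrable f volume) (hg : Continuous g)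
    (hs : HasCompactSupport g) : Integrable (fun x => f x * g x) volume := by
  have := h.integrable_smul_right_of_hasCompactSupport hg hs
  simpa [smul_eq_mul] using this
lemma weak_int {j : Fin n} {u g ψ : Pt n → ℂ} (hu : LocallyIntegrable u volume)
    (hg : LocallyIntegrable g volume) (h : HasWeakPD j u g) (hψ : IsTest ψ) :
    ∫ x, (g x * ψ x + u x * pd j ψ x) = 0 := by
  rw [integral_add (li_mul hg hψ.1.continuous hψ.2)
    (li_mul hu (isTest_pd hψ j).1.continuous (isTest_pd hψ j).2), h ψ hψ]
  ring

/-- first null term -/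
lemma null1 {j k : Fin n} {u gj gk φ : Pt n → ℂ} (hu : LocallyIntegrable u volume)
    (hgj : LocallyIntegrable gj volume) (hgk : LocallyIntegrable gk volume)
    (hj : HasWeakPD j u gj) (hk : HasWeakPD k u gk) (hφ : IsTest φ) :
    ∫ x, (gj x * pd k φ x - gk x * pd j φ x) = 0 := by
  rw [integral_sub (li_mul hgj (isTest_pd hφ k).1.continuous (isTest_pd hφ k).2)
    (li_mul hgk (isTest_pd hφ j).1.continuous (isTest_pd hφ j).2), hj _ (isTest_pd hφ k),
    hk _ (isTest_pd hφ j)]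
  simp only [pd_comm hφ.1 j k]
  ring

lemma null2_smooth {j : Fin n} {u g φ f : Pt n → ℂ} (hu : LocallyIntegrable u volume)
    (hg : LocallyIntegrable g volume) (h : HasWeakPD j u g) (hφ : IsTest φ)
    (hf : ContDiff ℝ (⊤ : ℕ∞) f) :
    ∫ x, (f x * (g x * φ x + u x * pd j φ x) + pd j f x * (u x * φ x)) = 0 := by
  rw [← weak_int hu hg h (isTest_mul hφ hf)]
  congr 1
  funext x
  rw [pd_mul (hf.differentiable (by simp) x) (hφ.1.differentiable (by simp) x)]
  ring

open Filter Topology in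
/-- second null term -/
lemma null2 {j : Fin n} {u g φ f : Pt n → ℂ} (hu : LocallyIntegrable u volume)
    (hg : LocallyIntegrable g volume) (h : HasWeakPD j u g) (hφ : IsTest φ)
    (hf : ContDiff ℝ 1 f) :
    ∫ x, (f x * (g x * φ x + u x * pd j φ x) + pd j f x * (u x * φ x)) = 0 := by
  obtain ⟨F, M, h1, h2, h3, h4, h5⟩ := approx1 f hf (tsupport φ) hφ.2
  have i1 := li_mul hg hφ.1.continuous hφ.2
  have i2 := li_mul hu (isTest_pd hφ j).1.continuous (isTest_pd hφ j).2
  have i3 := li_mul hu hφ.1.continuous hφ.2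
  have i4 : Integrable (fun x => g x * φ x + u x * pd j φ x) volume := i1.add i2
  have hcpd : ∀ m, Continuous (pd j (F m)) := fun m =>
    ((h1 m).continuous_fderiv (by simp)).clm_apply continuous_const
  have key := tendsto_integral_of_dominated_convergence (μ := volume)
    (F := fun m x => F m x * (g x * φ x + u x * pd j φ x) + pd j (F m) x * (u x * φ x))
    (f := fun x => f x * (g x * φ x + u x * pd j φ x) + pd j f x * (u x * φ x))
    (fun x => M * ‖g x * φ x + u x * pd j φ x‖ + M * ‖u x * φ x‖)
    (fun m => ((h1 m).continuous.aestronglyMeasurable.mul i4.aestronglyMeasurable).add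
      ((hcpd m).aestronglyMeasurable.mul i3.aestronglyMeasurable))
    ((i4.norm.const_mul M).add (i3.norm.const_mul M))
    (fun m => Eventually.of_forall fun x => by
      refine (norm_add_le _ _).trans ?_
      rw [norm_mul, norm_mul (pd j (F m) x)]
      gcongr
      · exact h2 m x
      · exact h3 m j x)
    (Eventually.of_forall fun x => by
      by_cases hx : x ∈ tsupport φ
      · exact ((h4 x hx).mul_const _).add ((h5 j x hx).mul_const _)
      · simp [image_eq_zero_of_notMem_tsupport hx, pd_zero_of_notMem hx])
  refine tendsto_nhds_unique key ?_
  simp only [null2_smooth hu hg h hφ (h1 _)]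
  exact tendsto_const_nhds

lemma contDiff_pd {f : Pt n → ℂ} (hf : ContDiff ℝ (⊤ : ℕ∞) f) (j : Fin n) :
    ContDiff ℝ (⊤ : ℕ∞) (pd j f) :=
  (hf.fderiv_right (m := (⊤ : ℕ∞)) (by simp)).clm_apply contDiff_const

lemma null3_smooth {j k : Fin n} {u gj gk φ f : Pt n → ℂ} (hu : LocallyIntegrable u volume)
    (hgj : LocallyIntegrable gj volume) (hgk : LocallyIntegrable gk volume)
    (hj : HasWeakPD j u gj) (hk : HasWeakPD k u gk) (hφ : IsTest φ)
    (hf : ContDiff ℝ (⊤ : ℕ∞) f) :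
    ∫ x, (pd j f x * (gk x * φ x + u x * pd k φ x) - pd k f x * (gj x * φ x + u x * pd j φ x))
      = 0 := by
  have e1 := weak_int hu hgk hk (isTest_mul hφ (contDiff_pd hf j))
  have e2 := weak_int hu hgj hj (isTest_mul hφ (contDiff_pd hf k))
  have I : ∀ {j : Fin n} {g ψ : Pt n → ℂ}, LocallyIntegrable g volume → IsTest ψ →
      Integrable (fun x => g x * ψ x + u x * pd j ψ x) volume := fun {j g ψ} hg hψ =>
    (li_mul hg hψ.1.continuous hψ.2).add
    (li_mul hu (isTest_pd hψ j).1.continuous (isTest_pd hψ j).2)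
  have e3 := integral_sub (I (j := k) hgk (isTest_mul hφ (contDiff_pd hf j)))
    (I (j := j) hgj (isTest_mul hφ (contDiff_pd hf k)))
  rw [e1, e2, sub_zero] at e3
  rw [← e3]
  congr 1
  funext x
  rw [pd_mul ((contDiff_pd hf _).differentiable (by simp) x) (hφ.1.differentiable (by simp) x),
    pd_mul ((contDiff_pd hf _).differentiable (by simp) x) (hφ.1.differentiable (by simp) x),
    pd_comm hf j k]
  ring

open Filter Topology in
/-- third null term -/
lemma null3 {j k : Fin n} {u gj gk φ f : Pt n → ℂ} (hu : LocallyIntegrable u volume)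
    (hgj : LocallyIntegrable gj volume) (hgk : LocallyIntegrable gk volume)
    (hj : HasWeakPD j u gj) (hk : HasWeakPD k u gk) (hφ : IsTest φ)
    (hf : ContDiff ℝ 1 f) :
    ∫ x, (pd j f x * (gk x * φ x + u x * pd k φ x) - pd k f x * (gj x * φ x + u x * pd j φ x))
      = 0 := by
  obtain ⟨F, M, h1, h2, h3, h4, h5⟩ := approx1 f hf (tsupport φ) hφ.2
  have I : ∀ {j : Fin n} {g : Pt n → ℂ}, LocallyIntegrable g volume →
      Integrable (fun x => g x * φ x + u x * pd j φ x) volume := fun {j g} hg =>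
    (li_mul hg hφ.1.continuous hφ.2).add
    (li_mul hu (isTest_pd hφ j).1.continuous (isTest_pd hφ j).2)
  have ij := I (j := j) hgj
  have ik := I (j := k) hgk
  have hcpd : ∀ m j, Continuous (pd j (F m)) := fun m j =>
    ((h1 m).continuous_fderiv (by simp)).clm_apply continuous_const
  have key := tendsto_integral_of_dominated_convergence (μ := volume)
    (F := fun m x => pd j (F m) x * (gk x * φ x + u x * pd k φ x)
      - pd k (F m) x * (gj x * φ x + u x * pd j φ x))
    (f := fun x => pd j f x * (gk x * φ x + u x * pd k φ x)
      - pd k f x * (gj x * φ x + u x * pd j φ x))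
    (fun x => M * ‖gk x * φ x + u x * pd k φ x‖ + M * ‖gj x * φ x + u x * pd j φ x‖)
    (fun m => ((hcpd m j).aestronglyMeasurable.mul ik.aestronglyMeasurable).sub
      ((hcpd m k).aestronglyMeasurable.mul ij.aestronglyMeasurable))
    ((ik.norm.const_mul M).add (ij.norm.const_mul M))
    (fun m => Eventually.of_forall fun x => by
      refine (norm_sub_le _ _).trans ?_
      rw [norm_mul, norm_mul (pd k (F m) x)]
      gcongr
      · exact h3 m j x
      · exact h3 m k x)
    (Eventually.of_forall fun x => by
      by_cases hx : x ∈ tsupport φ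
      · exact ((h5 j x hx).mul_const _).sub ((h5 k x hx).mul_const _)
      · simp [image_eq_zero_of_notMem_tsupport hx, pd_zero_of_notMem hx])
  refine tendsto_nhds_unique key ?_
  simp only [null3_smooth hu hgj hgk hj hk hφ (h1 _)]
  exact tendsto_const_nhds

namespace Coeffs

variable (C : Coeffs)

lemma γ_slit (x : Pt 3) : C.γ x ∈ Complex.slitPlane := by
  left
  have h : (C.γ x).re = C.εf x := by
    have : C.γ x = (C.εf x : ℂ) + ((C.σf x / C.ω : ℝ) : ℂ) * Complex.I := by
      unfold γ; push_cast; ring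
    rw [this]; simp
  rw [h]
  exact C.hε₀.trans_le (C.hεge x)

lemma μ_slit (x : Pt 3) : (C.μf x : ℂ) ∈ Complex.slitPlane := by
  left
  simpa using C.hμ₀.trans_le (C.hμge x)

lemma contDiff_clog {f : Pt 3 → ℂ} (hf : ContDiff ℝ 1 f) (h : ∀ x, f x ∈ Complex.slitPlane) :
    ContDiff ℝ 1 (fun x => Complex.log (f x)) := by
  rw [contDiff_iff_contDiffAt] at hf ⊢
  intro x
  exact ((Complex.contDiffAt_log (h x)).restrict_scalars ℝ).comp x (hf x)

lemma contDiff_a : ContDiff ℝ 1 C.a := by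
  refine contDiff_const.mul (contDiff_clog ?_ C.γ_slit)
  have h1 := Complex.ofRealCLM.contDiff.comp C.hεC1
  have h2 := Complex.ofRealCLM.contDiff.comp C.hσC1
  exact h1.add ((contDiff_const.mul h2).div_const _)

lemma contDiff_b : ContDiff ℝ 1 C.b :=
  contDiff_const.mul (contDiff_clog (Complex.ofRealCLM.contDiff.comp C.hμC1) C.μ_slit)

lemma c0_eq (x : Pt 3) : C.c0 x = Complex.I * C.ω * Complex.exp (C.a x + C.b x) := by
  unfold c0 sg sm
  rw [Complex.exp_add]; ring

lemma contDiff_c0 : ContDiff ℝ 1 C.c0 := by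
  rw [funext C.c0_eq]
  exact contDiff_const.mul ((C.contDiff_a.add C.contDiff_b).cexp)

lemma pd_cexp {f : Pt 3 → ℂ} (hf : ContDiff ℝ 1 f) (k : ℂ) (j : Fin 3) (x : Pt 3) :
    pd j (fun y => k * Complex.exp (f y)) x = k * Complex.exp (f x) * pd j f x := by
  have hd := hf.differentiable (by norm_num) x
  have := (hd.hasFDerivAt.cexp).const_mul k
  unfold pd
  rw [this.fderiv]
  simp [mul_assoc]

lemma pd_ab (j : Fin 3) (x : Pt 3) :
    pd j (fun y => C.a y + C.b y) x = pd j C.a x + pd j C.b x := by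
  have h := (C.contDiff_a.differentiable (by norm_num) x).hasFDerivAt.add
    (C.contDiff_b.differentiable (by norm_num) x).hasFDerivAt
  unfold pd
  rw [show (fun y => C.a y + C.b y) = C.a + C.b from rfl, h.fderiv]
  rfl

lemma pd_c0 (j : Fin 3) (x : Pt 3) :
    pd j C.c0 x = C.c0 x * (pd j C.a x + pd j C.b x) := by
  rw [funext C.c0_eq, pd_cexp (C.contDiff_a.add C.contDiff_b), pd_ab]

lemma pd_sgm (j : Fin 3) (x : Pt 3) :
    Complex.I * C.ω * pd j (fun y => C.sg y * C.sm y) x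
      = C.c0 x * (pd j C.a x + pd j C.b x) := by
  have : (fun y => C.sg y * C.sm y) = fun y => 1 * Complex.exp (C.a y + C.b y) := by
    funext y; unfold sg sm; rw [Complex.exp_add]; ring
  rw [this, pd_cexp (C.contDiff_a.add C.contDiff_b), pd_ab, c0_eq]
  ring

lemma c0_sq (x : Pt 3) : C.c0 x ^ 2 = -((C.ω : ℂ) ^ 2 * (C.γ x * (C.μf x : ℂ))) := by
  have h1 : C.sg x ^ 2 = C.γ x := by
    unfold sg a
    rw [← Complex.exp_nat_mul]
    push_cast
    rw [← mul_assoc, show (2 : ℂ) * (1 / 2) = 1 by norm_num, one_mul,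
      Complex.exp_log (Complex.slitPlane_ne_zero (C.γ_slit x))]
  have h2 : C.sm x ^ 2 = (C.μf x : ℂ) := by
    unfold sm b
    rw [← Complex.exp_nat_mul]
    push_cast
    rw [← mul_assoc, show (2 : ℂ) * (1 / 2) = 1 by norm_num, one_mul,
      Complex.exp_log (Complex.slitPlane_ne_zero (C.μ_slit x))]
  unfold c0
  rw [← h1, ← h2]
  linear_combination (C.ω : ℂ) ^ 2 * C.sg x ^ 2 * C.sm x ^ 2 * Complex.I_sq

end Coeffs
lemma ginner_eq (u v : GF 3) : ginner u v = u ∅ * v ∅ + u {0} * v {0} + u {1} * v {1}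
    + u {2} * v {2} + u {0, 1} * v {0, 1} + u {0, 2} * v {0, 2} + u {1, 2} * v {1, 2}
    + u {0, 1, 2} * v {0, 1, 2} := by
  have h : (univ : Finset (Finset (Fin 3))) = {∅, {0}, {1}, {2}, {0, 1}, {0, 2}, {1, 2}, {0, 1, 2}} := by
    decide
  unfold ginner
  rw [h]
  repeat rw [Finset.sum_insert (by decide)]
  rw [Finset.sum_singleton]
  ring

lemma oneG_single (c : Fin 3 → ℂ) (j : Fin 3) : oneG c {j} = c j := by
  unfold oneG
  simp only [Finset.singleton_inj]
  simp

lemma oneG_card (c : Fin 3 → ℂ) (S : Finset (Fin 3)) (h : S.card ≠ 1) : oneG c S = 0 := by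
  unfold oneG
  refine Finset.sum_eq_zero fun j _ => if_neg ?_
  rintro rfl
  exact h (Finset.card_singleton j)

lemma oneG_vals (c : Fin 3 → ℂ) : oneG c ∅ = 0 ∧ oneG c {0} = c 0 ∧ oneG c {1} = c 1 ∧
    oneG c {2} = c 2 ∧ oneG c {0, 1} = 0 ∧ oneG c {0, 2} = 0 ∧ oneG c {1, 2} = 0 ∧
    oneG c {0, 1, 2} = 0 :=
  ⟨oneG_card _ _ (by decide), oneG_single _ _, oneG_single _ _, oneG_single _ _,
    oneG_card _ _ (by decide), oneG_card _ _ (by decide), oneG_card _ _ (by decide),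
    oneG_card _ _ (by decide)⟩

lemma dxe_eq (j : Fin 3) : dxe j = oneG (fun i => if i = j then 1 else 0) := by
  funext S
  unfold dxe oneG
  by_cases h : S = {j}
  · subst h
    simp [Finset.singleton_inj]
  · rw [if_neg h, Finset.sum_eq_zero]
    intro i _
    by_cases hi : i = j
    · subst hi; simp [h]
    · simp [hi]

lemma wedge_oneG (c : Fin 3 → ℂ) (v : GF 3) (S : Finset (Fin 3)) :
    wedge (oneG c) v S = ∑ j : Fin 3, if j ∈ S then
      (-1 : ℂ) ^ (((({j} : Finset (Fin 3)) ×ˢ (S \ {j})).filter fun p => p.2 < p.1).card)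
        * c j * v (S \ {j}) else 0 := by
  unfold wedge msgn
  rw [← Finset.sum_filter]
  symm
  refine Finset.sum_of_injOn (fun j => ({j} : Finset (Fin 3))) ?_ ?_ ?_ ?_
  · intro a _ b _ h; simpa using h
  · intro j hj; simpa using hj
  · intro I hI hn
    rw [oneG_card, mul_zero, zero_mul]
    intro h1
    obtain ⟨j, rfl⟩ := Finset.card_eq_one.1 h1
    apply hn
    exact ⟨j, by simpa using hI, rfl⟩
  · intro j _
    rw [oneG_single]

lemma vee_oneG (c : Fin 3 → ℂ) (v : GF 3) (S : Finset (Fin 3)) :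
    vee (oneG c) v S = ∑ j : Fin 3, if j ∉ S then
      (-1 : ℂ) ^ (((S ×ˢ ({j} : Finset (Fin 3))).filter fun p => p.2 < p.1).card)
        * c j * v (S ∪ {j}) else 0 := by
  unfold vee msgn
  rw [← Finset.sum_filter]
  symm
  refine Finset.sum_of_injOn (fun j => ({j} : Finset (Fin 3))) ?_ ?_ ?_ ?_
  · intro a _ b _ h; simpa using h
  · intro j hj; simpa using hj
  · intro I hI hn
    rw [oneG_card, mul_zero, zero_mul]
    intro h1
    obtain ⟨j, rfl⟩ := Finset.card_eq_one.1 h1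
    apply hn
    exact ⟨j, by simpa using hI, rfl⟩
  · intro j _
    rw [oneG_single]
lemma wedge_vals (c : Fin 3 → ℂ) (v : GF 3) :
    wedge (oneG c) v ∅ = 0 ∧
    wedge (oneG c) v {0} = c 0 * v ∅ ∧
    wedge (oneG c) v {1} = c 1 * v ∅ ∧
    wedge (oneG c) v {2} = c 2 * v ∅ ∧
    wedge (oneG c) v {0, 1} = c 0 * v {1} - c 1 * v {0} ∧
    wedge (oneG c) v {0, 2} = c 0 * v {2} - c 2 * v {0} ∧
    wedge (oneG c) v {1, 2} = c 1 * v {2} - c 2 * v {1} ∧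
    wedge (oneG c) v {0, 1, 2} = c 0 * v {1, 2} - c 1 * v {0, 2} + c 2 * v {0, 1} := by
  refine ⟨?_, ?_, ?_, ?_, ?_, ?_, ?_, ?_⟩
  · rw [wedge_oneG, Fin.sum_univ_three]
    rw [if_neg (show ¬ ((0 : Fin 3) ∈ (∅ : Finset (Fin 3))) by decide)]
    rw [if_neg (show ¬ ((1 : Fin 3) ∈ (∅ : Finset (Fin 3))) by decide)]
    rw [if_neg (show ¬ ((2 : Fin 3) ∈ (∅ : Finset (Fin 3))) by decide)]
    ring
  · rw [wedge_oneG, Fin.sum_univ_three]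
    rw [if_pos (show ((0 : Fin 3) ∈ ({0} : Finset (Fin 3))) by decide), show (({0} : Finset (Fin 3)) \ {0}) = ∅ by decide,
      show ((({0} : Finset (Fin 3)) ×ˢ (∅ : Finset (Fin 3))).filter fun p => p.2 < p.1).card = 0 by decide]
    rw [if_neg (show ¬ ((1 : Fin 3) ∈ ({0} : Finset (Fin 3))) by decide)]
    rw [if_neg (show ¬ ((2 : Fin 3) ∈ ({0} : Finset (Fin 3))) by decide)]
    ring
  · rw [wedge_oneG, Fin.sum_univ_three]
    rw [if_neg (show ¬ ((0 : Fin 3) ∈ ({1} : Finset (Fin 3))) by decide)]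
    rw [if_pos (show ((1 : Fin 3) ∈ ({1} : Finset (Fin 3))) by decide), show (({1} : Finset (Fin 3)) \ {1}) = ∅ by decide,
      show ((({1} : Finset (Fin 3)) ×ˢ (∅ : Finset (Fin 3))).filter fun p => p.2 < p.1).card = 0 by decide]
    rw [if_neg (show ¬ ((2 : Fin 3) ∈ ({1} : Finset (Fin 3))) by decide)]
    ring
  · rw [wedge_oneG, Fin.sum_univ_three]
    rw [if_neg (show ¬ ((0 : Fin 3) ∈ ({2} : Finset (Fin 3))) by decide)]
    rw [if_neg (show ¬ ((1 : Fin 3) ∈ ({2} : Finset (Fin 3))) by decide)]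
    rw [if_pos (show ((2 : Fin 3) ∈ ({2} : Finset (Fin 3))) by decide), show (({2} : Finset (Fin 3)) \ {2}) = ∅ by decide,
      show ((({2} : Finset (Fin 3)) ×ˢ (∅ : Finset (Fin 3))).filter fun p => p.2 < p.1).card = 0 by decide]
    ring
  · rw [wedge_oneG, Fin.sum_univ_three]
    rw [if_pos (show ((0 : Fin 3) ∈ ({0, 1} : Finset (Fin 3))) by decide), show (({0, 1} : Finset (Fin 3)) \ {0}) = {1} by decide,
      show ((({0} : Finset (Fin 3)) ×ˢ ({1} : Finset (Fin 3))).filter fun p => p.2 < p.1).card = 0 by decide]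
    rw [if_pos (show ((1 : Fin 3) ∈ ({0, 1} : Finset (Fin 3))) by decide), show (({0, 1} : Finset (Fin 3)) \ {1}) = {0} by decide,
      show ((({1} : Finset (Fin 3)) ×ˢ ({0} : Finset (Fin 3))).filter fun p => p.2 < p.1).card = 1 by decide]
    rw [if_neg (show ¬ ((2 : Fin 3) ∈ ({0, 1} : Finset (Fin 3))) by decide)]
    ring
  · rw [wedge_oneG, Fin.sum_univ_three]
    rw [if_pos (show ((0 : Fin 3) ∈ ({0, 2} : Finset (Fin 3))) by decide), show (({0, 2} : Finset (Fin 3)) \ {0}) = {2} by decide,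
      show ((({0} : Finset (Fin 3)) ×ˢ ({2} : Finset (Fin 3))).filter fun p => p.2 < p.1).card = 0 by decide]
    rw [if_neg (show ¬ ((1 : Fin 3) ∈ ({0, 2} : Finset (Fin 3))) by decide)]
    rw [if_pos (show ((2 : Fin 3) ∈ ({0, 2} : Finset (Fin 3))) by decide), show (({0, 2} : Finset (Fin 3)) \ {2}) = {0} by decide,
      show ((({2} : Finset (Fin 3)) ×ˢ ({0} : Finset (Fin 3))).filter fun p => p.2 < p.1).card = 1 by decide]
    ring
  · rw [wedge_oneG, Fin.sum_univ_three]
    rw [if_neg (show ¬ ((0 : Fin 3) ∈ ({1, 2} : Finset (Fin 3))) by decide)]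
    rw [if_pos (show ((1 : Fin 3) ∈ ({1, 2} : Finset (Fin 3))) by decide), show (({1, 2} : Finset (Fin 3)) \ {1}) = {2} by decide,
      show ((({1} : Finset (Fin 3)) ×ˢ ({2} : Finset (Fin 3))).filter fun p => p.2 < p.1).card = 0 by decide]
    rw [if_pos (show ((2 : Fin 3) ∈ ({1, 2} : Finset (Fin 3))) by decide), show (({1, 2} : Finset (Fin 3)) \ {2}) = {1} by decide,
      show ((({2} : Finset (Fin 3)) ×ˢ ({1} : Finset (Fin 3))).filter fun p => p.2 < p.1).card = 1 by decide]
    ring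
  · rw [wedge_oneG, Fin.sum_univ_three]
    rw [if_pos (show ((0 : Fin 3) ∈ ({0, 1, 2} : Finset (Fin 3))) by decide), show (({0, 1, 2} : Finset (Fin 3)) \ {0}) = {1, 2} by decide,
      show ((({0} : Finset (Fin 3)) ×ˢ ({1, 2} : Finset (Fin 3))).filter fun p => p.2 < p.1).card = 0 by decide]
    rw [if_pos (show ((1 : Fin 3) ∈ ({0, 1, 2} : Finset (Fin 3))) by decide), show (({0, 1, 2} : Finset (Fin 3)) \ {1}) = {0, 2} by decide,
      show ((({1} : Finset (Fin 3)) ×ˢ ({0, 2} : Finset (Fin 3))).filter fun p => p.2 < p.1).card = 1 by decide]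
    rw [if_pos (show ((2 : Fin 3) ∈ ({0, 1, 2} : Finset (Fin 3))) by decide), show (({0, 1, 2} : Finset (Fin 3)) \ {2}) = {0, 1} by decide,
      show ((({2} : Finset (Fin 3)) ×ˢ ({0, 1} : Finset (Fin 3))).filter fun p => p.2 < p.1).card = 2 by decide]
    ring

lemma vee_vals (c : Fin 3 → ℂ) (v : GF 3) :
    vee (oneG c) v ∅ = c 0 * v {0} + c 1 * v {1} + c 2 * v {2} ∧
    vee (oneG c) v {0} = c 1 * v {0, 1} + c 2 * v {0, 2} ∧
    vee (oneG c) v {1} = -c 0 * v {0, 1} + c 2 * v {1, 2} ∧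
    vee (oneG c) v {2} = -c 0 * v {0, 2} - c 1 * v {1, 2} ∧
    vee (oneG c) v {0, 1} = c 2 * v {0, 1, 2} ∧
    vee (oneG c) v {0, 2} = -c 1 * v {0, 1, 2} ∧
    vee (oneG c) v {1, 2} = c 0 * v {0, 1, 2} ∧
    vee (oneG c) v {0, 1, 2} = 0 := by
  refine ⟨?_, ?_, ?_, ?_, ?_, ?_, ?_, ?_⟩
  · rw [vee_oneG, Fin.sum_univ_three]
    rw [if_pos (show ((0 : Fin 3) ∉ (∅ : Finset (Fin 3))) by decide), show ((∅ : Finset (Fin 3)) ∪ {0}) = {0} by decide,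
      show (((∅ : Finset (Fin 3)) ×ˢ ({0} : Finset (Fin 3))).filter fun p => p.2 < p.1).card = 0 by decide]
    rw [if_pos (show ((1 : Fin 3) ∉ (∅ : Finset (Fin 3))) by decide), show ((∅ : Finset (Fin 3)) ∪ {1}) = {1} by decide,
      show (((∅ : Finset (Fin 3)) ×ˢ ({1} : Finset (Fin 3))).filter fun p => p.2 < p.1).card = 0 by decide]
    rw [if_pos (show ((2 : Fin 3) ∉ (∅ : Finset (Fin 3))) by decide), show ((∅ : Finset (Fin 3)) ∪ {2}) = {2} by decide,
      show (((∅ : Finset (Fin 3)) ×ˢ ({2} : Finset (Fin 3))).filter fun p => p.2 < p.1).card = 0 by decide]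
    ring
  · rw [vee_oneG, Fin.sum_univ_three]
    rw [if_neg (show ¬ ((0 : Fin 3) ∉ ({0} : Finset (Fin 3))) by decide)]
    rw [if_pos (show ((1 : Fin 3) ∉ ({0} : Finset (Fin 3))) by decide), show (({0} : Finset (Fin 3)) ∪ {1}) = {0, 1} by decide,
      show ((({0} : Finset (Fin 3)) ×ˢ ({1} : Finset (Fin 3))).filter fun p => p.2 < p.1).card = 0 by decide]
    rw [if_pos (show ((2 : Fin 3) ∉ ({0} : Finset (Fin 3))) by decide), show (({0} : Finset (Fin 3)) ∪ {2}) = {0, 2} by decide,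
      show ((({0} : Finset (Fin 3)) ×ˢ ({2} : Finset (Fin 3))).filter fun p => p.2 < p.1).card = 0 by decide]
    ring
  · rw [vee_oneG, Fin.sum_univ_three]
    rw [if_pos (show ((0 : Fin 3) ∉ ({1} : Finset (Fin 3))) by decide), show (({1} : Finset (Fin 3)) ∪ {0}) = {0, 1} by decide,
      show ((({1} : Finset (Fin 3)) ×ˢ ({0} : Finset (Fin 3))).filter fun p => p.2 < p.1).card = 1 by decide]
    rw [if_neg (show ¬ ((1 : Fin 3) ∉ ({1} : Finset (Fin 3))) by decide)]
    rw [if_pos (show ((2 : Fin 3) ∉ ({1} : Finset (Fin 3))) by decide), show (({1} : Finset (Fin 3)) ∪ {2}) = {1, 2} by decide,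
      show ((({1} : Finset (Fin 3)) ×ˢ ({2} : Finset (Fin 3))).filter fun p => p.2 < p.1).card = 0 by decide]
    ring
  · rw [vee_oneG, Fin.sum_univ_three]
    rw [if_pos (show ((0 : Fin 3) ∉ ({2} : Finset (Fin 3))) by decide), show (({2} : Finset (Fin 3)) ∪ {0}) = {0, 2} by decide,
      show ((({2} : Finset (Fin 3)) ×ˢ ({0} : Finset (Fin 3))).filter fun p => p.2 < p.1).card = 1 by decide]
    rw [if_pos (show ((1 : Fin 3) ∉ ({2} : Finset (Fin 3))) by decide), show (({2} : Finset (Fin 3)) ∪ {1}) = {1, 2} by decide,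
      show ((({2} : Finset (Fin 3)) ×ˢ ({1} : Finset (Fin 3))).filter fun p => p.2 < p.1).card = 1 by decide]
    rw [if_neg (show ¬ ((2 : Fin 3) ∉ ({2} : Finset (Fin 3))) by decide)]
    ring
  · rw [vee_oneG, Fin.sum_univ_three]
    rw [if_neg (show ¬ ((0 : Fin 3) ∉ ({0, 1} : Finset (Fin 3))) by decide)]
    rw [if_neg (show ¬ ((1 : Fin 3) ∉ ({0, 1} : Finset (Fin 3))) by decide)]
    rw [if_pos (show ((2 : Fin 3) ∉ ({0, 1} : Finset (Fin 3))) by decide), show (({0, 1} : Finset (Fin 3)) ∪ {2}) = {0, 1, 2} by decide,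
      show ((({0, 1} : Finset (Fin 3)) ×ˢ ({2} : Finset (Fin 3))).filter fun p => p.2 < p.1).card = 0 by decide]
    ring
  · rw [vee_oneG, Fin.sum_univ_three]
    rw [if_neg (show ¬ ((0 : Fin 3) ∉ ({0, 2} : Finset (Fin 3))) by decide)]
    rw [if_pos (show ((1 : Fin 3) ∉ ({0, 2} : Finset (Fin 3))) by decide), show (({0, 2} : Finset (Fin 3)) ∪ {1}) = {0, 1, 2} by decide,
      show ((({0, 2} : Finset (Fin 3)) ×ˢ ({1} : Finset (Fin 3))).filter fun p => p.2 < p.1).card = 1 by decide]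
    rw [if_neg (show ¬ ((2 : Fin 3) ∉ ({0, 2} : Finset (Fin 3))) by decide)]
    ring
  · rw [vee_oneG, Fin.sum_univ_three]
    rw [if_pos (show ((0 : Fin 3) ∉ ({1, 2} : Finset (Fin 3))) by decide), show (({1, 2} : Finset (Fin 3)) ∪ {0}) = {0, 1, 2} by decide,
      show ((({1, 2} : Finset (Fin 3)) ×ˢ ({0} : Finset (Fin 3))).filter fun p => p.2 < p.1).card = 2 by decide]
    rw [if_neg (show ¬ ((1 : Fin 3) ∉ ({1, 2} : Finset (Fin 3))) by decide)]
    rw [if_neg (show ¬ ((2 : Fin 3) ∉ ({1, 2} : Finset (Fin 3))) by decide)]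
    ring
  · rw [vee_oneG, Fin.sum_univ_three]
    rw [if_neg (show ¬ ((0 : Fin 3) ∉ ({0, 1, 2} : Finset (Fin 3))) by decide)]
    rw [if_neg (show ¬ ((1 : Fin 3) ∉ ({0, 1, 2} : Finset (Fin 3))) by decide)]
    rw [if_neg (show ¬ ((2 : Fin 3) ∉ ({0, 1, 2} : Finset (Fin 3))) by decide)]
    ring

lemma proj0_vals (v : GF 3) :
    proj 0 v ∅ = v ∅ ∧ proj 0 v {0} = 0 ∧ proj 0 v {1} = 0 ∧ proj 0 v {2} = 0 ∧ proj 0 v {0, 1} = 0 ∧ proj 0 v {0, 2} = 0 ∧ proj 0 v {1, 2} = 0 ∧ proj 0 v {0, 1, 2} = 0 := by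
  refine ⟨?_, ?_, ?_, ?_, ?_, ?_, ?_, ?_⟩
  · exact if_pos (by decide)
  · exact if_neg (by decide)
  · exact if_neg (by decide)
  · exact if_neg (by decide)
  · exact if_neg (by decide)
  · exact if_neg (by decide)
  · exact if_neg (by decide)
  · exact if_neg (by decide)

lemma proj1_vals (v : GF 3) :
    proj 1 v ∅ = 0 ∧ proj 1 v {0} = v {0} ∧ proj 1 v {1} = v {1} ∧ proj 1 v {2} = v {2} ∧ proj 1 v {0, 1} = 0 ∧ proj 1 v {0, 2} = 0 ∧ proj 1 v {1, 2} = 0 ∧ proj 1 v {0, 1, 2} = 0 := by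
  refine ⟨?_, ?_, ?_, ?_, ?_, ?_, ?_, ?_⟩
  · exact if_neg (by decide)
  · exact if_pos (by decide)
  · exact if_pos (by decide)
  · exact if_pos (by decide)
  · exact if_neg (by decide)
  · exact if_neg (by decide)
  · exact if_neg (by decide)
  · exact if_neg (by decide)

lemma proj2_vals (v : GF 3) :
    proj 2 v ∅ = 0 ∧ proj 2 v {0} = 0 ∧ proj 2 v {1} = 0 ∧ proj 2 v {2} = 0 ∧ proj 2 v {0, 1} = v {0, 1} ∧ proj 2 v {0, 2} = v {0, 2} ∧ proj 2 v {1, 2} = v {1, 2} ∧ proj 2 v {0, 1, 2} = 0 := by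
  refine ⟨?_, ?_, ?_, ?_, ?_, ?_, ?_, ?_⟩
  · exact if_neg (by decide)
  · exact if_neg (by decide)
  · exact if_neg (by decide)
  · exact if_neg (by decide)
  · exact if_pos (by decide)
  · exact if_pos (by decide)
  · exact if_pos (by decide)
  · exact if_neg (by decide)

lemma proj3_vals (v : GF 3) :
    proj 3 v ∅ = 0 ∧ proj 3 v {0} = 0 ∧ proj 3 v {1} = 0 ∧ proj 3 v {2} = 0 ∧ proj 3 v {0, 1} = 0 ∧ proj 3 v {0, 2} = 0 ∧ proj 3 v {1, 2} = 0 ∧ proj 3 v {0, 1, 2} = v {0, 1, 2} := by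
  refine ⟨?_, ?_, ?_, ?_, ?_, ?_, ?_, ?_⟩
  · exact if_neg (by decide)
  · exact if_neg (by decide)
  · exact if_neg (by decide)
  · exact if_neg (by decide)
  · exact if_neg (by decide)
  · exact if_neg (by decide)
  · exact if_neg (by decide)
  · exact if_pos (by decide)

lemma alt_vals (v : GF 3) :
    altSign v ∅ = v ∅ ∧ altSign v {0} = -v {0} ∧ altSign v {1} = -v {1} ∧ altSign v {2} = -v {2} ∧ altSign v {0, 1} = v {0, 1} ∧ altSign v {0, 2} = v {0, 2} ∧ altSign v {1, 2} = v {1, 2} ∧ altSign v {0, 1, 2} = -v {0, 1, 2} := by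
  refine ⟨?_, ?_, ?_, ?_, ?_, ?_, ?_, ?_⟩
  · rw [altSign, show (∅ : Finset (Fin 3)).card = 0 by decide]; ring
  · rw [altSign, show ({0} : Finset (Fin 3)).card = 1 by decide]; ring
  · rw [altSign, show ({1} : Finset (Fin 3)).card = 1 by decide]; ring
  · rw [altSign, show ({2} : Finset (Fin 3)).card = 1 by decide]; ring
  · rw [altSign, show ({0, 1} : Finset (Fin 3)).card = 2 by decide]; ring
  · rw [altSign, show ({0, 2} : Finset (Fin 3)).card = 2 by decide]; ring
  · rw [altSign, show ({1, 2} : Finset (Fin 3)).card = 2 by decide]; ring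
  · rw [altSign, show ({0, 1, 2} : Finset (Fin 3)).card = 3 by decide]; ring

lemma gd_vals (D : Fin 3 → GF 3) :
    gd D ∅ = 0 ∧
    gd D {0} = D 0 ∅ ∧
    gd D {1} = D 1 ∅ ∧
    gd D {2} = D 2 ∅ ∧
    gd D {0, 1} = D 0 {1} - D 1 {0} ∧
    gd D {0, 2} = D 0 {2} - D 2 {0} ∧
    gd D {1, 2} = D 1 {2} - D 2 {1} ∧
    gd D {0, 1, 2} = D 0 {1, 2} - D 1 {0, 2} + D 2 {0, 1} := by
  refine ⟨?_, ?_, ?_, ?_, ?_, ?_, ?_, ?_⟩ <;> simp [gd, Fin.sum_univ_three, dxe_eq, wedge_vals] <;> ring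

lemma gdel_vals (D : Fin 3 → GF 3) :
    gdel D ∅ = -D 0 {0} - D 1 {1} - D 2 {2} ∧
    gdel D {0} = D 1 {0, 1} + D 2 {0, 2} ∧
    gdel D {1} = -D 0 {0, 1} + D 2 {1, 2} ∧
    gdel D {2} = -D 0 {0, 2} - D 1 {1, 2} ∧
    gdel D {0, 1} = -D 2 {0, 1, 2} ∧
    gdel D {0, 2} = D 1 {0, 1, 2} ∧
    gdel D {1, 2} = -D 0 {0, 1, 2} ∧
    gdel D {0, 1, 2} = 0 := by
  refine ⟨?_, ?_, ?_, ?_, ?_, ?_, ?_, ?_⟩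
  · rw [gdel, show (∅ : Finset (Fin 3)).card = 0 by decide]
    simp [Fin.sum_univ_three, dxe_eq, vee_vals] <;> ring
  · rw [gdel, show ({0} : Finset (Fin 3)).card = 1 by decide]
    simp [Fin.sum_univ_three, dxe_eq, vee_vals] <;> ring
  · rw [gdel, show ({1} : Finset (Fin 3)).card = 1 by decide]
    simp [Fin.sum_univ_three, dxe_eq, vee_vals] <;> ring
  · rw [gdel, show ({2} : Finset (Fin 3)).card = 1 by decide]
    simp [Fin.sum_univ_three, dxe_eq, vee_vals] <;> ring
  · rw [gdel, show ({0, 1} : Finset (Fin 3)).card = 2 by decide]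
    simp [Fin.sum_univ_three, dxe_eq, vee_vals] <;> ring
  · rw [gdel, show ({0, 2} : Finset (Fin 3)).card = 2 by decide]
    simp [Fin.sum_univ_three, dxe_eq, vee_vals] <;> ring
  · rw [gdel, show ({1, 2} : Finset (Fin 3)).card = 2 by decide]
    simp [Fin.sum_univ_three, dxe_eq, vee_vals] <;> ring
  · rw [gdel, show ({0, 1, 2} : Finset (Fin 3)).card = 3 by decide]
    simp [Fin.sum_univ_three, dxe_eq, vee_vals] <;> ring
set_option maxHeartbeats 4000000
set_option maxRecDepth 10000

def Z1 (Dw Df : Fin 3 → GF 3) (j k : Fin 3) (S T : Finset (Fin 3)) : ℂ :=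
  Dw j S * Df k T - Dw k S * Df j T

def Z2 (c : ℂ) (s : Fin 3 → ℂ) (w : GF 3) (Dw : Fin 3 → GF 3) (f : GF 3) (Df : Fin 3 → GF 3)
    (j : Fin 3) (S T : Finset (Fin 3)) : ℂ :=
  c * (Dw j S * f T + w S * Df j T) + s j * (w S * f T)

def Z3 (a : Fin 3 → ℂ) (w : GF 3) (Dw : Fin 3 → GF 3) (f : GF 3) (Df : Fin 3 → GF 3)
    (j k : Fin 3) (S T : Finset (Fin 3)) : ℂ :=
  a j * (Dw k S * f T + w S * Df k T) - a k * (Dw j S * f T + w S * Df j T)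

def Res (a b : Fin 3 → ℂ) (c : ℂ) (w : GF 3) (Dw : Fin 3 → GF 3) (f : GF 3)
    (Df : Fin 3 → GF 3) : ℂ :=
    Z1 Dw Df 0 1 ∅ {0, 1}
    + Z1 Dw Df 0 1 {2} {0, 1, 2}
    - Z1 Dw Df 0 1 {0, 1, 2} {2}
    - Z1 Dw Df 0 1 {0, 1} ∅
    - Z1 Dw Df 1 2 {0, 1, 2} {0}
    - Z1 Dw Df 0 2 {1} {0, 1, 2}
    + Z1 Dw Df 1 2 {0} {0, 1, 2}
    + Z1 Dw Df 0 2 ∅ {0, 2}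
    + Z1 Dw Df 0 2 {0, 1, 2} {1}
    + Z1 Dw Df 1 2 ∅ {1, 2}
    - Z1 Dw Df 0 2 {0, 2} ∅
    - Z1 Dw Df 1 2 {1, 2} ∅
    - Z2 c (fun j => c * (a j + b j)) w Dw f Df 0 {0} ∅
    + Z2 c (fun j => c * (a j + b j)) w Dw f Df 0 {0, 1} {1}
    - Z2 c (fun j => c * (a j + b j)) w Dw f Df 0 {0, 1, 2} {1, 2}
    + Z2 c (fun j => c * (a j + b j)) w Dw f Df 0 {0, 2} {2}
    + Z2 c (fun j => c * (a j + b j)) w Dw f Df 0 {1} {0, 1}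
    - Z2 c (fun j => c * (a j + b j)) w Dw f Df 0 {1, 2} {0, 1, 2}
    + Z2 c (fun j => c * (a j + b j)) w Dw f Df 0 {2} {0, 2}
    - Z2 c (fun j => c * (a j + b j)) w Dw f Df 0 ∅ {0}
    - Z2 c (fun j => c * (a j + b j)) w Dw f Df 1 {0} {0, 1}
    - Z3 a w Dw f Df 0 1 {0, 1} ∅
    - Z2 c (fun j => c * (a j + b j)) w Dw f Df 1 {0, 1} {0}
    + Z3 b w Dw f Df 0 1 {0, 1, 2} {2}
    + Z2 c (fun j => c * (a j + b j)) w Dw f Df 1 {0, 1, 2} {0, 2}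
    + Z2 c (fun j => c * (a j + b j)) w Dw f Df 1 {0, 2} {0, 1, 2}
    - Z2 c (fun j => c * (a j + b j)) w Dw f Df 1 {1} ∅
    + Z2 c (fun j => c * (a j + b j)) w Dw f Df 1 {1, 2} {2}
    + Z3 b w Dw f Df 0 1 {2} {0, 1, 2}
    + Z2 c (fun j => c * (a j + b j)) w Dw f Df 1 {2} {1, 2}
    - Z3 a w Dw f Df 0 1 ∅ {0, 1}
    - Z2 c (fun j => c * (a j + b j)) w Dw f Df 1 ∅ {1}
    + Z3 b w Dw f Df 1 2 {0} {0, 1, 2}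
    - Z2 c (fun j => c * (a j + b j)) w Dw f Df 2 {0} {0, 2}
    - Z2 c (fun j => c * (a j + b j)) w Dw f Df 2 {0, 1} {0, 1, 2}
    - Z3 b w Dw f Df 0 2 {0, 1, 2} {1}
    + Z3 b w Dw f Df 1 2 {0, 1, 2} {0}
    - Z2 c (fun j => c * (a j + b j)) w Dw f Df 2 {0, 1, 2} {0, 1}
    - Z3 a w Dw f Df 0 2 {0, 2} ∅
    - Z2 c (fun j => c * (a j + b j)) w Dw f Df 2 {0, 2} {0}
    - Z3 b w Dw f Df 0 2 {1} {0, 1, 2}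
    - Z2 c (fun j => c * (a j + b j)) w Dw f Df 2 {1} {1, 2}
    - Z3 a w Dw f Df 1 2 {1, 2} ∅
    - Z2 c (fun j => c * (a j + b j)) w Dw f Df 2 {1, 2} {1}
    - Z2 c (fun j => c * (a j + b j)) w Dw f Df 2 {2} ∅
    - Z3 a w Dw f Df 0 2 ∅ {0, 2}
    - Z3 a w Dw f Df 1 2 ∅ {1, 2}
    - Z2 c (fun j => c * (a j + b j)) w Dw f Df 2 ∅ {2}

lemma Ptfull_vals (a b : Fin 3 → ℂ) (c : ℂ) (D : Fin 3 → GF 3) (v : GF 3) :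
    Ptfull (oneG a) (oneG b) c D v ∅ =
      -D 0 {0} - D 1 {1} - D 2 {2} + b 0 * v {0} + b 1 * v {1} + b 2 * v {2} + c * v ∅ ∧
    Ptfull (oneG a) (oneG b) c D v {0} =
      -D 0 ∅ - D 1 {0, 1} - D 2 {0, 2} + a 0 * v ∅ - a 1 * v {0, 1} - a 2 * v {0, 2} + c * v {0} ∧
    Ptfull (oneG a) (oneG b) c D v {1} =
      D 0 {0, 1} - D 1 ∅ - D 2 {1, 2} + a 0 * v {0, 1} + a 1 * v ∅ - a 2 * v {1, 2} + c * v {1} ∧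
    Ptfull (oneG a) (oneG b) c D v {2} =
      D 0 {0, 2} + D 1 {1, 2} - D 2 ∅ + a 0 * v {0, 2} + a 1 * v {1, 2} + a 2 * v ∅ + c * v {2} ∧
    Ptfull (oneG a) (oneG b) c D v {0, 1} =
      D 0 {1} - D 1 {0} - D 2 {0, 1, 2} + b 0 * v {1} - b 1 * v {0} + b 2 * v {0, 1, 2} + c * v {0, 1} ∧
    Ptfull (oneG a) (oneG b) c D v {0, 2} =
      D 0 {2} + D 1 {0, 1, 2} - D 2 {0} + b 0 * v {2} - b 1 * v {0, 1, 2} - b 2 * v {0} + c * v {0, 2} ∧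
    Ptfull (oneG a) (oneG b) c D v {1, 2} =
      -D 0 {0, 1, 2} + D 1 {2} - D 2 {1} + b 0 * v {0, 1, 2} + b 1 * v {2} - b 2 * v {1} + c * v {1, 2} ∧
    Ptfull (oneG a) (oneG b) c D v {0, 1, 2} =
      -D 0 {1, 2} + D 1 {0, 2} - D 2 {0, 1} + a 0 * v {1, 2} - a 1 * v {0, 2} + a 2 * v {0, 1} + c * v {0, 1, 2} := by
  refine ⟨?_, ?_, ?_, ?_, ?_, ?_, ?_, ?_⟩ <;>
  · simp only [Ptfull, P0t, Pi.add_apply, Pi.sub_apply, Pi.neg_apply, Pi.smul_apply, smul_eq_mul,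
      wedge_vals, vee_vals, proj0_vals, proj1_vals, proj2_vals, proj3_vals, gd_vals, gdel_vals,
      alt_vals]
    ring

lemma key_alg (a b m : Fin 3 → ℂ) (c t om gm q : ℂ) (w f : GF 3) (Dw Df : Fin 3 → GF 3)
    (hc : c ^ 2 = -(om ^ 2 * gm)) (hm : ∀ j, t * m j = c * (a j + b j)) :
    ginner (Ptfull (oneG a) (oneG b) c Dw w) (Ptfull (oneG a) (oneG b) c Df f)
    - (ginner (gdel Dw) (gdel Df) + ginner (gd Dw) (gd Df) - om ^ 2 * q * ginner w f)
    + om ^ 2 * (gm - q) * ginner w f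
    - ginner ((2 * t) • (vee (oneG m) (proj 1 w + proj 3 w)
        + wedge (oneG m) (proj 0 w + proj 2 w))) f
    - (ginner (oneG a) (oneG a) * ginner (proj 0 w + proj 2 w) (proj 0 f + proj 2 f)
      + ginner (oneG b) (oneG b) * ginner (proj 1 w + proj 3 w) (proj 1 f + proj 3 f))
    - ((∑ j, a j * (ginner (proj 2 (Dw j) - proj 0 (Dw j)) (proj 0 f + proj 2 f)
          + ginner (proj 2 w - proj 0 w) (proj 0 (Df j) + proj 2 (Df j))))
      + ∑ j, b j * (ginner (proj 1 (Dw j) - proj 3 (Dw j)) (proj 1 f + proj 3 f)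
          + ginner (proj 1 w - proj 3 w) (proj 1 (Df j) + proj 3 (Df j))))
    - dstarPair b (fun j => w {j}) (fun j => f {j}) (fun j k => Dw j {k}) (fun j k => Df j {k})
    - dstarPair a (star2 w) (star2 f) (fun j k => star2 (Dw j) k) (fun j k => star2 (Df j) k)
    = Res a b c w Dw f Df := by
  have s0 : ∀ u : GF 3, star2 u 0 = u {1, 2} := fun u => rfl
  have s1 : ∀ u : GF 3, star2 u 1 = -u {0, 2} := fun u => rfl
  have s2 : ∀ u : GF 3, star2 u 2 = u {0, 1} := fun u => rfl
  simp only [ginner_eq, Ptfull_vals, Pi.add_apply, Pi.sub_apply, Pi.smul_apply, smul_eq_mul,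
    wedge_vals, vee_vals, proj0_vals, proj1_vals, proj2_vals, proj3_vals, gd_vals, gdel_vals,
    oneG_vals, dstarPair, Fin.sum_univ_three, s0, s1, s2, Res, Z1, Z2, Z3]
  linear_combination (w ∅ * f ∅ + w {0} * f {0} + w {1} * f {1}
    + w {2} * f {2} + w {0, 1} * f {0, 1} + w {0, 2} * f {0, 2} + w {1, 2} * f {1, 2}
    + w {0, 1, 2} * f {0, 1, 2}) * hc
    - 2 * (w {0} * f ∅ + w ∅ * f {0} + w {0, 1, 2} * f {1, 2} + w {1, 2} * f {0, 1, 2}) * hm 0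
    - 2 * (w {1} * f ∅ + w ∅ * f {1} - w {0, 1, 2} * f {0, 2} - w {0, 2} * f {0, 1, 2}) * hm 1
    - 2 * (w {2} * f ∅ + w ∅ * f {2} + w {0, 1, 2} * f {0, 1} + w {0, 1} * f {0, 1, 2}) * hm 2
/-- a class of functions closed under sums and multiplication by continuous functions -/
structure IsMod (p : (Pt 3 → ℂ) → Prop) : Prop where
  zero : p fun _ => 0
  add : ∀ f g, p f → p g → p fun x => f x + g x
  cmul : ∀ c f, Continuous c → p f → p fun x => c x * f x

namespace IsMod

variable {p : (Pt 3 → ℂ) → Prop} (hp : IsMod p)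

include hp

lemma neg {f : Pt 3 → ℂ} (h : p f) : p fun x => -f x := by
  have := hp.cmul (fun _ => -1) f continuous_const h
  simpa using this

lemma sub {f g : Pt 3 → ℂ} (h : p f) (h' : p g) : p fun x => f x - g x := by
  simpa [sub_eq_add_neg] using hp.add _ _ h (hp.neg h')

lemma sum {ι : Type} (s : Finset ι) {f : ι → Pt 3 → ℂ} (h : ∀ i ∈ s, p (f i)) :
    p fun x => ∑ i ∈ s, f i x := by
  classical
  induction s using Finset.induction_on with
  | empty => simpa using hp.zero
  | insert a s ha ih =>
    simp only [Finset.sum_insert ha]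
    exact hp.add _ _ (h a (by simp)) (ih fun i hi => h i (by simp [hi]))

lemma wedge {A v : Form 3} (hA : ∀ S, Continuous fun x => A x S) (hv : ∀ S, p fun x => v x S)
    (S : Finset (Fin 3)) : p fun x => EMPaper.wedge (A x) (v x) S :=
  hp.sum _ fun I _ => hp.cmul (fun x => msgn I (S \ I) * A x I) _ (continuous_const.mul (hA I))
    (hv _)

lemma vee {A v : Form 3} (hA : ∀ S, Continuous fun x => A x S) (hv : ∀ S, p fun x => v x S)
    (S : Finset (Fin 3)) : p fun x => EMPaper.vee (A x) (v x) S :=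
  hp.sum _ fun I _ => hp.cmul (fun x => msgn S I * A x I) _ (continuous_const.mul (hA I)) (hv _)

lemma proj {v : Form 3} (hv : ∀ S, p fun x => v x S) (l : ℕ) (S : Finset (Fin 3)) :
    p fun x => EMPaper.proj l (v x) S := by
  unfold EMPaper.proj
  by_cases h : S.card = l
  · simpa [h] using hv S
  · simpa [h] using hp.zero

lemma proj_add {v : Form 3} (hv : ∀ S, p fun x => v x S) (k l : ℕ) (S : Finset (Fin 3)) :
    p fun x => (EMPaper.proj k (v x) + EMPaper.proj l (v x)) S :=
  hp.add _ _ (hp.proj hv k S) (hp.proj hv l S)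

lemma proj_sub {v : Form 3} (hv : ∀ S, p fun x => v x S) (k l : ℕ) (S : Finset (Fin 3)) :
    p fun x => (EMPaper.proj k (v x) - EMPaper.proj l (v x)) S :=
  hp.sub (hp.proj hv k S) (hp.proj hv l S)

lemma altSign {v : Form 3} (hv : ∀ S, p fun x => v x S) (S : Finset (Fin 3)) :
    p fun x => EMPaper.altSign (v x) S :=
  hp.cmul _ _ continuous_const (hv S)

lemma gd {D : Fin 3 → Form 3} (hD : ∀ j S, p fun x => D j x S) (S : Finset (Fin 3)) :
    p fun x => EMPaper.gd (fun j => D j x) S :=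
  hp.sum _ fun j _ => hp.wedge (A := fun _ => dxe j) (fun _ => continuous_const) (hD j) S

lemma gdel {D : Fin 3 → Form 3} (hD : ∀ j S, p fun x => D j x S) (S : Finset (Fin 3)) :
    p fun x => EMPaper.gdel (fun j => D j x) S :=
  hp.cmul _ _ continuous_const
    (hp.sum _ fun j _ => hp.vee (A := fun _ => dxe j) (fun _ => continuous_const) (hD j) S)

lemma Ptfull {A B v : Form 3} {c : Pt 3 → ℂ} {D : Fin 3 → Form 3}
    (hA : ∀ S, Continuous fun x => A x S) (hB : ∀ S, Continuous fun x => B x S)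
    (hc : Continuous c) (hD : ∀ j S, p fun x => D j x S) (hv : ∀ S, p fun x => v x S)
    (S : Finset (Fin 3)) :
    p fun x => EMPaper.Ptfull (A x) (B x) (c x) (fun j => D j x) (v x) S := by
  have hD' : ∀ j S, p fun x => EMPaper.altSign (D j x) S := fun j => hp.altSign (hD j)
  refine hp.add _ _ (hp.neg (hp.add _ _ (hp.gd hD' S) (hp.gdel hD' S))) ?_
  refine hp.add _ _ (hp.sub (hp.add _ _ (hp.add _ _ ?_ ?_) ?_) ?_) (hp.cmul _ _ hc (hv S))
  · exact hp.wedge hB (hp.proj hv 1) S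
  · exact hp.vee hB (hp.proj_add hv 1 3) S
  · exact hp.wedge hA (hp.proj_add hv 0 2) S
  · exact hp.vee hA (hp.proj hv 2) S

lemma star2 {v : Form 3} (hv : ∀ S, p fun x => v x S) (k : Fin 3) :
    p fun x => EMPaper.star2 (v x) k := by
  unfold EMPaper.star2
  by_cases h0 : k = 0
  · simpa [h0] using hv _
  · by_cases h1 : k = 1
    · simpa [h1] using hp.neg (hv _)
    · simpa [h0, h1] using hv _

end IsMod

def LI (f : Pt 3 → ℂ) : Prop := LocallyIntegrable f volume
def CC (f : Pt 3 → ℂ) : Prop := Continuous f ∧ HasCompactSupport f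
def JJ (f : Pt 3 → ℂ) : Prop := LocallyIntegrable f volume ∧ HasCompactSupport f

lemma modLI : IsMod LI where
  zero := locallyIntegrable_zero
  add := fun _ _ h h' => LocallyIntegrable.add h h'
  cmul := fun c f hc h => by
    unfold LI at *
    rw [locallyIntegrable_iff] at *
    intro K hK
    exact (h K hK).continuousOn_mul hc.continuousOn hK

lemma modCC : IsMod CC where
  zero := ⟨continuous_const, HasCompactSupport.zero⟩
  add := fun _ _ h h' => ⟨h.1.add h'.1, h.2.add h'.2⟩
  cmul := fun _ _ hc h => ⟨hc.mul h.1, h.2.mul_left⟩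

lemma modJJ : IsMod JJ where
  zero := ⟨modLI.zero, HasCompactSupport.zero⟩
  add := fun _ _ h h' => ⟨h.1.add h'.1, h.2.add h'.2⟩
  cmul := fun _ _ hc h => ⟨modLI.cmul _ _ hc h.1, h.2.mul_left⟩

lemma JJ.int {f : Pt 3 → ℂ} (h : JJ f) : Integrable f volume := by
  rw [← integrableOn_iff_integrable_of_support_subset (subset_tsupport f)]
  exact h.1.integrableOn_isCompact h.2

lemma JJ.mk' {f g : Pt 3 → ℂ} (h : LI f) (h' : CC g) : JJ fun x => f x * g x :=
  ⟨(li_mul h h'.1 h'.2).locallyIntegrable, h'.2.mul_left⟩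

lemma JJ.ginner {u v : Form 3} (h : ∀ S, LI fun x => u x S) (h' : ∀ S, CC fun x => v x S) :
    JJ fun x => EMPaper.ginner (u x) (v x) :=
  modJJ.sum _ fun S _ => JJ.mk' (h S) (h' S)

lemma JJ.dstar {c u v : Fin 3 → Pt 3 → ℂ} {du dv : Fin 3 → Fin 3 → Pt 3 → ℂ}
    (hc : ∀ k, Continuous (c k)) (hu : ∀ k, LI (u k)) (hv : ∀ k, CC (v k))
    (hdu : ∀ j k, LI (du j k)) (hdv : ∀ j k, CC (dv j k)) :
    JJ fun x => dstarPair (fun k => c k x) (fun k => u k x) (fun k => v k x)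
      (fun j k => du j k x) (fun j k => dv j k x) :=
  modJJ.sum _ fun k _ => modJJ.cmul _ _ (hc k) (modJJ.neg (modJJ.sum _ fun j _ =>
    modJJ.add _ _ (modJJ.add _ _ (modJJ.add _ _ (JJ.mk' (hdu j j) (hv k))
      (JJ.mk' (hu j) (hdv j k))) (JJ.mk' (hdu j k) (hv j))) (JJ.mk' (hu k) (hdv j j))))

def Null (f : Pt 3 → ℂ) : Prop := JJ f ∧ ∫ x, f x = 0

lemma Null.add {f g : Pt 3 → ℂ} (h : Null f) (h' : Null g) : Null fun x => f x + g x :=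
  ⟨modJJ.add _ _ h.1 h'.1, by rw [integral_add h.1.int h'.1.int, h.2, h'.2, add_zero]⟩

lemma Null.sub {f g : Pt 3 → ℂ} (h : Null f) (h' : Null g) : Null fun x => f x - g x :=
  ⟨modJJ.sub h.1 h'.1, by rw [integral_sub h.1.int h'.1.int, h.2, h'.2, sub_zero]⟩

lemma Null.neg {f : Pt 3 → ℂ} (h : Null f) : Null fun x => - f x :=
  ⟨modJJ.neg h.1, by rw [integral_neg, h.2, neg_zero]⟩

lemma pd_cont {f : Pt 3 → ℂ} (hf : ContDiff ℝ 1 f) (j : Fin 3) : Continuous (pd j f) :=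
  (hf.continuous_fderiv (by norm_num)).clm_apply continuous_const

lemma oneG_cont {c : Fin 3 → Pt 3 → ℂ} (h : ∀ j, Continuous (c j)) (S : Finset (Fin 3)) :
    Continuous fun x => oneG (fun j => c j x) S := by
  unfold oneG
  refine continuous_finsetSum _ fun j _ => ?_
  by_cases hS : S = {j}
  · simpa [hS] using h j
  · simpa [hS] using continuous_const

lemma res_null (C : Coeffs) (w : Form 3) (Dw : Fin 3 → Form 3)
    (hw : H1locWith w Dw) (φ : Form 3) (hφ : TestForm φ) :
    Null fun x => Res (fun j => pd j C.a x) (fun j => pd j C.b x) (C.c0 x) (w x)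
      (fun j => Dw j x) (φ x) (fun j => Dcl φ j x) := by
  have hwL : ∀ S, LI fun x => w x S := fun S => (hw.1 S).li
  have hDL : ∀ j S, LI fun x => Dw j x S := fun j S => (hw.2.2 j S).li
  have hφC : ∀ S, CC fun x => φ x S := fun S => ⟨(hφ S).1.continuous, (hφ S).2⟩
  have hDC : ∀ j S, CC fun x => Dcl φ j x S := fun j S =>
    ⟨(isTest_pd (hφ S) j).1.continuous, (isTest_pd (hφ S) j).2⟩
  have leib : ∀ j S T, JJ fun x => Dw j x S * φ x T + w x S * Dcl φ j x T := fun j S T =>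
    modJJ.add _ _ (JJ.mk' (hDL j S) (hφC T)) (JJ.mk' (hwL S) (hDC j T))
  have n1 : ∀ j k S T, Null fun x => Z1 (fun j => Dw j x) (fun j => Dcl φ j x) j k S T :=
    fun j k S T => ⟨modJJ.sub (JJ.mk' (hDL j S) (hDC k T)) (JJ.mk' (hDL k S) (hDC j T)),
      null1 (hwL S) (hDL j S) (hDL k S) (hw.2.1 j S) (hw.2.1 k S) (hφ T)⟩
  have n2 : ∀ j S T, Null fun x => Z2 (C.c0 x)
      (fun j => C.c0 x * (pd j C.a x + pd j C.b x)) (w x) (fun j => Dw j x) (φ x)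
      (fun j => Dcl φ j x) j S T := by
    intro j S T
    refine ⟨modJJ.add _ _ (modJJ.cmul _ _ C.contDiff_c0.continuous (leib j S T))
      (modJJ.cmul _ _ (C.contDiff_c0.continuous.mul
        ((pd_cont C.contDiff_a j).add (pd_cont C.contDiff_b j)))
        (JJ.mk' (hwL S) (hφC T))), ?_⟩
    have := null2 (hwL S) (hDL j S) (hw.2.1 j S) (hφ T) C.contDiff_c0
    simp only [C.pd_c0] at this
    exact this
  have n3 : ∀ f : Pt 3 → ℂ, ContDiff ℝ 1 f → ∀ j k S T, Null fun x => Z3 (fun j => pd j f x)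
      (w x) (fun j => Dw j x) (φ x) (fun j => Dcl φ j x) j k S T :=
    fun f hf j k S T => ⟨modJJ.sub (modJJ.cmul _ _ (pd_cont hf j) (leib k S T))
        (modJJ.cmul _ _ (pd_cont hf k) (leib j S T)),
      null3 (hwL S) (hDL j S) (hDL k S) (hw.2.1 j S) (hw.2.1 k S) (hφ T) hf⟩
  have n3a := n3 C.a C.contDiff_a
  have n3b := n3 C.b C.contDiff_b
  clear n3
  unfold Res
  repeat' with_reducible first
    | refine Null.add ?_ ?_
    | refine Null.sub ?_ ?_
    | refine Null.neg ?_
    | exact n1 _ _ _ _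
    | exact n2 _ _ _
    | exact n3a _ _ _ _
    | exact n3b _ _ _ _

lemma integral_combine {L R q1 q2 q3 q4 q5 q6 r : Pt 3 → ℂ} (hL : JJ L) (hR : JJ R) (h1 : JJ q1)
    (h2 : JJ q2) (h3 : JJ q3) (h4 : JJ q4) (h5 : JJ q5) (h6 : JJ q6) (hr : Null r)
    (h : ∀ x, L x - R x + q1 x - q2 x - q3 x - q4 x - q5 x - q6 x = r x) :
    ∫ x, L x = (∫ x, R x) + (-(∫ x, q1 x) + (∫ x, q2 x) + (∫ x, q3 x) + (∫ x, q4 x)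
      + (∫ x, q5 x) + (∫ x, q6 x)) := by
  have e := hr.2
  rw [← funext h] at e
  have i1 := modJJ.sub hL hR
  have i2 := modJJ.add _ _ i1 h1
  have i3 := modJJ.sub i2 h2
  have i4 := modJJ.sub i3 h3
  have i5 := modJJ.sub i4 h4
  have i6 := modJJ.sub i5 h5
  rw [integral_sub i6.int h6.int, integral_sub i5.int h5.int, integral_sub i4.int h4.int,
    integral_sub i3.int h3.int, integral_sub i2.int h2.int, integral_add i1.int h1.int,
    integral_sub hL.int hR.int] at e
  linear_combination e

/-- identity (2.8).  For a graded form `w` with components in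
`H¹_loc(ℝ³)` and a smooth compactly supported graded form `φ`,
`∫⟨P(γ,μ,ω)^t w, P(γ,μ,ω)^t φ⟩ dx
  = ∫ [⟨δw,δφ⟩ + ⟨dw,dφ⟩ − ω²ε₀μ₀⟨w,φ⟩] dx + ⟨Q(γ,μ,ω)w, φ⟩`. -/
theorem statement4 (C : Coeffs) (w : Form 3) (Dw : Fin 3 → Form 3)
    (hw : H1locWith w Dw) (φ : Form 3) (hφ : TestForm φ) :
    (∫ x, ginner (Ptfull (C.da x) (C.db x) (C.c0 x) (fun j => Dw j x) (w x))
        (Ptfull (C.da x) (C.db x) (C.c0 x) (fun j => Dcl φ j x) (φ x)))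
      = (∫ x, ginner (gdel fun j => Dw j x) (gdel fun j => Dcl φ j x)
          + ginner (gd fun j => Dw j x) (gd fun j => Dcl φ j x)
          - (C.ω : ℂ) ^ 2 * ((C.ε₀ * C.μ₀ : ℝ) : ℂ) * ginner (w x) (φ x))
        + Qpair C w Dw φ := by
  have hwL : ∀ S, LI fun x => w x S := fun S => (hw.1 S).li
  have hDL : ∀ j S, LI fun x => Dw j x S := fun j S => (hw.2.2 j S).li
  have hφC : ∀ S, CC fun x => φ x S := fun S => ⟨(hφ S).1.continuous, (hφ S).2⟩
  have hDC : ∀ j S, CC fun x => Dcl φ j x S := fun j S =>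
    ⟨(isTest_pd (hφ S) j).1.continuous, (isTest_pd (hφ S) j).2⟩
  have hac := pd_cont C.contDiff_a
  have hbc := pd_cont C.contDiff_b
  have hda : ∀ S, Continuous fun x => C.da x S := oneG_cont hac
  have hdb : ∀ S, Continuous fun x => C.db x S := oneG_cont hbc
  have hsg : ContDiff ℝ 1 (fun y => C.sg y * C.sm y) := C.contDiff_a.cexp.mul C.contDiff_b.cexp
  have hds : ∀ S, Continuous fun x => C.dsgm x S := oneG_cont (pd_cont hsg)
  have hc0 := C.contDiff_c0.continuous
  have hγ : Continuous C.γ := by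
    unfold Coeffs.γ
    have h1 := C.hεC1.continuous
    have h2 := C.hσC1.continuous
    fun_prop
  have hμ : Continuous fun x => (C.μf x : ℂ) :=
    Complex.continuous_ofReal.comp C.hμC1.continuous
  have hgi : ∀ {A : Form 3}, (∀ S, Continuous fun x => A x S) →
      Continuous fun x => ginner (A x) (A x) := fun {A} hA =>
    continuous_finsetSum _ fun S _ => (hA S).mul (hA S)
  have base : JJ fun x => ginner (w x) (φ x) := JJ.ginner hwL hφC
  unfold Qpair
  refine integral_combine ?_ ?_ ?_ ?_ ?_ ?_ ?_ ?_ (res_null C w Dw hw φ hφ) ?_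
  · exact JJ.ginner (modLI.Ptfull hda hdb hc0 hDL hwL) (modCC.Ptfull hda hdb hc0 hDC hφC)
  · exact modJJ.sub (modJJ.add _ _ (JJ.ginner (modLI.gdel hDL) (modCC.gdel hDC))
      (JJ.ginner (modLI.gd hDL) (modCC.gd hDC))) (modJJ.cmul _ _ continuous_const base)
  · exact modJJ.cmul _ _ (continuous_const.mul ((hγ.mul hμ).sub continuous_const)) base
  · refine JJ.ginner (fun S => modLI.cmul _ _ continuous_const (modLI.add _ _ ?_ ?_)) hφC
    · exact modLI.vee hds (modLI.proj_add hwL 1 3) S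
    · exact modLI.wedge hds (modLI.proj_add hwL 0 2) S
  · exact modJJ.add _ _
      (modJJ.cmul _ _ (hgi hda) (JJ.ginner (modLI.proj_add hwL 0 2) (modCC.proj_add hφC 0 2)))
      (modJJ.cmul _ _ (hgi hdb) (JJ.ginner (modLI.proj_add hwL 1 3) (modCC.proj_add hφC 1 3)))
  · refine modJJ.add _ _ (modJJ.sum _ fun j _ => modJJ.cmul _ _ (hac j) (modJJ.add _ _ ?_ ?_))
      (modJJ.sum _ fun j _ => modJJ.cmul _ _ (hbc j) (modJJ.add _ _ ?_ ?_))
    · exact JJ.ginner (modLI.proj_sub (hDL j) 2 0) (modCC.proj_add hφC 0 2)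
    · exact JJ.ginner (modLI.proj_sub hwL 2 0) (modCC.proj_add (hDC j) 0 2)
    · exact JJ.ginner (modLI.proj_sub (hDL j) 1 3) (modCC.proj_add hφC 1 3)
    · exact JJ.ginner (modLI.proj_sub hwL 1 3) (modCC.proj_add (hDC j) 1 3)
  · exact JJ.dstar hbc (fun k => hwL {k}) (fun k => hφC {k}) (fun j k => hDL j {k})
      (fun j k => hDC j {k})
  · exact JJ.dstar hac (modLI.star2 hwL) (modCC.star2 hφC) (fun j => modLI.star2 (hDL j))
      (fun j => modCC.star2 (hDC j))
  · intro x
    have := key_alg (fun j => pd j C.a x) (fun j => pd j C.b x)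
      (fun j => pd j (fun y => C.sg y * C.sm y) x) (C.c0 x) (Complex.I * C.ω) C.ω
      (C.γ x * (C.μf x : ℂ)) ((C.ε₀ * C.μ₀ : ℝ) : ℂ) (w x) (φ x) (fun j => Dw j x)
      (fun j => Dcl φ j x) (C.c0_sq x) (fun j => C.pd_sgm j x)
    rw [← mul_assoc (2 : ℂ)] at this
    exact this

end EMPaper
end
end

section
/- Let n ≥ 2, let G ⊆ ℝⁿ be open, let l, m ∈ {0,…,n}, let u be an l-form on G with components in L¹_loc possessing a weak coderivative δu with components in L¹_loc, and let v be a C¹ m-form on G. Then the (l−m)-form v∨u possesses a weak coderivative in L¹_loc and δ(v∨u) = (−1)^{l−m} dv∨u + v∨δu almost everywhere in G. -/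
noncomputable section

open MeasureTheory Finset

namespace EMPaper

variable {n : ℕ}

/-- A test function supported in the open set `G`. -/
def IsTestOn (G : Set (Pt n)) (φ : Pt n → ℂ) : Prop :=
  ContDiff ℝ (⊤ : ℕ∞) φ ∧ HasCompactSupport φ ∧ tsupport φ ⊆ G

/-- `g` is the weak `j`-th partial derivative of `f` on the open set `G`. -/
def HasWeakPDOn (G : Set (Pt n)) (j : Fin n) (f g : Pt n → ℂ) : Prop :=
  ∀ φ : Pt n → ℂ, IsTestOn G φ → ∫ x in G, g x * φ x = -∫ x in G, f x * pd j φ x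

/-- `f ∈ L²_loc(G)`. -/
def L2locOn (G : Set (Pt n)) (f : Pt n → ℂ) : Prop :=
  AEStronglyMeasurable f (volume.restrict G) ∧
    ∀ K : Set (Pt n), K ⊆ G → IsCompact K → IntegrableOn (fun x => ‖f x‖ ^ 2) K volume

/-- `f ∈ L¹_loc(G)`. -/
def L1locOn (G : Set (Pt n)) (f : Pt n → ℂ) : Prop :=
  MeasureTheory.LocallyIntegrableOn f G volume
/-- A graded form all of whose components are test functions supported in `G`. -/
def TestFormOn (G : Set (Pt n)) (φ : Form n) : Prop :=
  ∀ S : Finset (Fin n), IsTestOn G fun x => φ x S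

theorem msgn_union_left {I J K : Finset (Fin n)} (h : Disjoint I J) :
    msgn (I ∪ J) K = msgn I K * msgn J K := by
  unfold msgn
  rw [← pow_add, Finset.union_product, Finset.filter_union, Finset.card_union_of_disjoint]
  apply Finset.disjoint_filter_filter
  rw [Finset.disjoint_product]
  exact Or.inl h

theorem msgn_union_right {I J K : Finset (Fin n)} (h : Disjoint J K) :
    msgn I (J ∪ K) = msgn I J * msgn I K := by
  unfold msgn
  rw [← pow_add, Finset.product_union, Finset.filter_union, Finset.card_union_of_disjoint]
  apply Finset.disjoint_filter_filter
  rw [Finset.disjoint_product]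
  exact Or.inr h

theorem msgn_swap {I J : Finset (Fin n)} (h : Disjoint I J) :
    msgn I J = (-1 : ℂ) ^ (I.card * J.card) * msgn J I := by
  have key : ((I ×ˢ J).filter fun p => p.2 < p.1).card
      + ((J ×ˢ I).filter fun p => p.2 < p.1).card = I.card * J.card := by
    have h2 : ((J ×ˢ I).filter fun p => p.2 < p.1).card
        = ((I ×ˢ J).filter fun p => ¬ p.2 < p.1).card := by
      apply Finset.card_bij (fun p _ => (p.2, p.1))
      · rintro ⟨a, b⟩ hp
        simp only [Finset.mem_filter, Finset.mem_product] at hp ⊢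
        exact ⟨⟨hp.1.2, hp.1.1⟩, not_lt.mpr hp.2.le⟩
      · rintro ⟨a, b⟩ _ ⟨c, d⟩ _ he
        simp only [Prod.mk.injEq] at he ⊢
        exact ⟨he.2, he.1⟩
      · rintro ⟨a, b⟩ hp
        simp only [Finset.mem_filter, Finset.mem_product] at hp
        refine ⟨(b, a), ?_, rfl⟩
        simp only [Finset.mem_filter, Finset.mem_product]
        refine ⟨⟨hp.1.2, hp.1.1⟩, lt_of_le_of_ne (not_lt.mp hp.2) ?_⟩
        rintro rfl
        exact Finset.disjoint_left.mp h hp.1.1 hp.1.2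
    rw [h2, Finset.card_filter_add_card_filter_not, Finset.card_product]
  unfold msgn
  rw [← key, pow_add, mul_assoc, ← pow_add, ← two_mul, pow_mul]
  simp

theorem wedge_assoc (a b c : GF n) : wedge (wedge a b) c = wedge a (wedge b c) := by
  funext S
  simp only [wedge, Finset.mul_sum, Finset.sum_mul]
  rw [Finset.sum_sigma', Finset.sum_sigma']
  refine Finset.sum_bij' (fun p _ => ⟨p.2, p.1 \ p.2⟩) (fun p _ => ⟨p.1 ∪ p.2, p.1⟩) ?_ ?_ ?_ ?_ ?_
  · rintro ⟨I, A⟩ h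
    simp only [Finset.mem_sigma, Finset.mem_powerset] at h ⊢
    exact ⟨h.2.trans h.1, Finset.sdiff_subset_sdiff h.1 le_rfl⟩
  · rintro ⟨A, B⟩ h
    simp only [Finset.mem_sigma, Finset.mem_powerset] at h ⊢
    exact ⟨Finset.union_subset h.1 (h.2.trans Finset.sdiff_subset), Finset.subset_union_left⟩
  · rintro ⟨I, A⟩ h
    simp only [Finset.mem_sigma, Finset.mem_powerset] at h ⊢
    simp [Finset.union_sdiff_of_subset h.2]
  · rintro ⟨A, B⟩ h
    simp only [Finset.mem_sigma, Finset.mem_powerset] at h ⊢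
    have : Disjoint B A := Finset.disjoint_of_subset_left h.2 Finset.sdiff_disjoint
    simp [Finset.union_sdiff_cancel_left this.symm]
  · rintro ⟨I, A⟩ h
    simp only [Finset.mem_sigma, Finset.mem_powerset] at h ⊢
    obtain ⟨B, hB⟩ : ∃ B, B = I \ A := ⟨_, rfl⟩
    obtain ⟨C, hC⟩ : ∃ C, C = S \ I := ⟨_, rfl⟩
    have hI : I = A ∪ B := by rw [hB, Finset.union_sdiff_of_subset h.2]
    have e1 : (S \ A) \ B = C := by
      rw [hC, hI]; exact sdiff_sdiff_left
    have e2 : S \ A = B ∪ C := by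
      rw [← e1, Finset.union_sdiff_of_subset]
      rw [hB]; exact Finset.sdiff_subset_sdiff h.1 le_rfl
    have d1 : Disjoint A B := by rw [hB]; exact Finset.disjoint_sdiff
    have d2 : Disjoint B C := by rw [← e1]; exact Finset.disjoint_sdiff
    rw [← hB, ← hC, e1, e2, msgn_union_right d2, hI, msgn_union_left d1]
    ring

theorem wedge_comm_grade {k p : ℕ} {a b : GF n} (ha : IsGrade k a) (hb : IsGrade p b) :
    wedge a b = (-1 : ℂ) ^ (k * p) • wedge b a := by
  funext S
  simp only [wedge, Pi.smul_apply, smul_eq_mul, Finset.mul_sum]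
  refine Finset.sum_bij' (fun I _ => S \ I) (fun I _ => S \ I) ?_ ?_ ?_ ?_ ?_
  · intro I _; simp
  · intro I _; simp
  · intro I h; simp at h; simp [h]
  · intro I h; simp at h; simp [h]
  · intro I h
    simp only [Finset.mem_powerset] at h
    rw [Finset.sdiff_sdiff_eq_self h]
    by_cases h1 : I.card = k
    · by_cases h2 : (S \ I).card = p
      · rw [msgn_swap (Finset.disjoint_sdiff), h1, h2]; ring
      · rw [hb _ h2]; ring
    · rw [ha _ h1]; ring

theorem ginner_vee (v u w : GF n) : ginner (vee v u) w = ginner u (wedge w v) := by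
  simp only [ginner, vee, wedge, Finset.mul_sum, Finset.sum_mul]
  rw [Finset.sum_sigma', Finset.sum_sigma']
  refine Finset.sum_bij' (fun p _ => ⟨p.1 ∪ p.2, p.1⟩) (fun p _ => ⟨p.2, p.1 \ p.2⟩) ?_ ?_ ?_ ?_ ?_
  · rintro ⟨I, J⟩ h
    simp only [Finset.mem_sigma, Finset.mem_powerset, Finset.mem_univ, true_and]
    exact Finset.subset_union_left
  · rintro ⟨S, I⟩ h
    simp only [Finset.mem_sigma, Finset.mem_powerset, Finset.mem_univ, true_and] at h ⊢
    exact Finset.sdiff_subset_sdiff (Finset.subset_univ _) le_rfl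
  · rintro ⟨I, J⟩ h
    simp only [Finset.mem_sigma, Finset.mem_powerset] at h ⊢
    have : Disjoint J I := Finset.disjoint_of_subset_left h.2 Finset.sdiff_disjoint
    simp [Finset.union_sdiff_cancel_left this.symm]
  · rintro ⟨S, I⟩ h
    simp only [Finset.mem_sigma, Finset.mem_powerset] at h ⊢
    simp [Finset.union_sdiff_of_subset h.2]
  · rintro ⟨I, J⟩ h
    simp only [Finset.mem_sigma, Finset.mem_powerset] at h ⊢
    have : Disjoint J I := Finset.disjoint_of_subset_left h.2 Finset.sdiff_disjoint
    rw [Finset.union_sdiff_cancel_left this.symm]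
    ring

theorem wedge_add_right (a b c : GF n) : wedge a (b + c) = wedge a b + wedge a c := by
  funext S
  simp only [wedge, Pi.add_apply, ← Finset.sum_add_distrib, mul_add]

theorem wedge_smul_left (r : ℂ) (a b : GF n) : wedge (r • a) b = r • wedge a b := by
  funext S
  simp only [wedge, Pi.smul_apply, smul_eq_mul, Finset.mul_sum]
  exact Finset.sum_congr rfl fun _ _ => by ring

theorem wedge_gd_left (D : Fin n → GF n) (b : GF n) :
    wedge (gd D) b = ∑ j, wedge (wedge (dxe j) (D j)) b := by
  funext S
  simp only [wedge, gd, Finset.sum_apply, Finset.mul_sum, Finset.sum_mul]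
  rw [Finset.sum_comm]

theorem wedge_gd_right (D : Fin n → GF n) (a : GF n) :
    wedge a (gd D) = ∑ j, wedge a (wedge (dxe j) (D j)) := by
  funext S
  simp only [wedge, gd, Finset.sum_apply, Finset.mul_sum]
  rw [Finset.sum_comm]

theorem isGrade_dxe (j : Fin n) : IsGrade 1 (dxe j) := by
  intro S hS
  unfold dxe
  rw [if_neg]
  rintro rfl
  simp at hS

theorem isGrade_wedge {k p : ℕ} {a b : GF n} (ha : IsGrade k a) (hb : IsGrade p b) :
    IsGrade (k + p) (wedge a b) := by
  intro S hS
  apply Finset.sum_eq_zero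
  intro I hI
  simp only [Finset.mem_powerset] at hI
  by_cases h1 : I.card = k
  · have h2 : (S \ I).card ≠ p := by
      rintro rfl
      apply hS
      rw [← h1, add_comm, Finset.card_sdiff_add_card_eq_card hI]
    rw [hb _ h2, mul_zero]
  · rw [ha _ h1]; ring

theorem isGrade_gd {k : ℕ} {D : Fin n → GF n} (h : ∀ j, IsGrade k (D j)) :
    IsGrade (1 + k) (gd D) := by
  intro S hS
  apply Finset.sum_eq_zero
  intro j _
  exact isGrade_wedge (isGrade_dxe j) (h j) S hS

theorem ginner_grade {k p : ℕ} {a b : GF n} (ha : IsGrade k a) (hb : IsGrade p b) (h : k ≠ p) :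
    ginner a b = 0 := by
  apply Finset.sum_eq_zero
  intro S _
  by_cases h1 : S.card = k
  · rw [hb S (by omega), mul_zero]
  · rw [ha S h1, zero_mul]

theorem ginner_add_left (a b c : GF n) : ginner (a + b) c = ginner a c + ginner b c := by
  simp [ginner, add_mul, Finset.sum_add_distrib]

theorem ginner_smul_left (r : ℂ) (a c : GF n) : ginner (r • a) c = r * ginner a c := by
  simp [ginner, Finset.mul_sum, mul_assoc]

theorem ginner_add_right (a b c : GF n) : ginner a (b + c) = ginner a b + ginner a c := by
  simp [ginner, mul_add, Finset.sum_add_distrib]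

theorem ginner_smul_right (r : ℂ) (a c : GF n) : ginner a (r • c) = r * ginner a c := by
  simp only [ginner, Finset.mul_sum, Pi.smul_apply, smul_eq_mul]
  exact Finset.sum_congr rfl fun _ _ => by ring

/-- Algebraic Leibniz rule. -/
theorem gd_leibniz {k : ℕ} (a b : GF n) (A B : Fin n → GF n) (ha : IsGrade k a) :
    gd (fun j => wedge (A j) b + wedge a (B j))
      = wedge (gd A) b + (-1 : ℂ) ^ k • wedge a (gd B) := by
  rw [wedge_gd_left, wedge_gd_right, Finset.smul_sum, ← Finset.sum_add_distrib]
  have : gd (fun j => wedge (A j) b + wedge a (B j))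
      = ∑ j, wedge (dxe j) (wedge (A j) b + wedge a (B j)) := by
    funext S; simp [gd]
  rw [this]
  refine Finset.sum_congr rfl fun j _ => ?_
  rw [wedge_add_right, wedge_assoc]
  congr 1
  rw [← wedge_assoc, ← wedge_assoc, wedge_comm_grade ha (isGrade_dxe j), wedge_smul_left, smul_smul,
    mul_one, ← pow_add, ← two_mul, pow_mul]
  simp

open Filter Topology in
/-- Convergence of integrals over `G`, with integrability. -/
def TI (G : Set (Pt n)) (Θ : ℕ → Pt n → ℂ) (θ : Pt n → ℂ) : Prop :=
  (∀ i, IntegrableOn (Θ i) G volume) ∧ IntegrableOn θ G volume ∧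
    Tendsto (fun i => ∫ x in G, Θ i x) atTop (𝓝 (∫ x in G, θ x))

theorem TI.sum {G : Set (Pt n)} {ι : Type*} (s : Finset ι) {Θ : ι → ℕ → Pt n → ℂ}
    {θ : ι → Pt n → ℂ} (h : ∀ a ∈ s, TI G (Θ a) (θ a)) :
    TI G (fun i x => ∑ a ∈ s, Θ a i x) (fun x => ∑ a ∈ s, θ a x) := by
  refine ⟨fun i => integrable_finsetSum s fun a ha => (h a ha).1 i,
    integrable_finsetSum s fun a ha => (h a ha).2.1, ?_⟩
  rw [integral_finsetSum s fun a ha => (h a ha).2.1]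
  simp_rw [fun i => integral_finsetSum s fun a ha => (h a ha).1 i]
  exact tendsto_finsetSum s fun a ha => (h a ha).2.2

theorem TI.const_mul {G : Set (Pt n)} {Θ : ℕ → Pt n → ℂ} {θ : Pt n → ℂ} (c : ℂ)
    (h : TI G Θ θ) : TI G (fun i x => c * Θ i x) (fun x => c * θ x) := by
  refine ⟨fun i => (h.1 i).const_mul c, h.2.1.const_mul c, ?_⟩
  simp_rw [integral_const_mul]
  exact h.2.2.const_mul c

theorem integrableOn_mul_of_supp {G K : Set (Pt n)} (hG : IsOpen G) (hK : IsCompact K)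
    (hKG : K ⊆ G) {g h : Pt n → ℂ} (hg : L1locOn G g) (hh : ContinuousOn h G)
    (h0 : ∀ x, x ∉ K → h x = 0) : IntegrableOn (fun x => g x * h x) G volume := by
  have h1 : IntegrableOn (fun x => g x * h x) K volume :=
    (hg.integrableOn_compact_subset hKG hK).mul_continuousOn (hh.mono hKG) hK
  refine h1.of_forall_sdiff_eq_zero hG.measurableSet ?_
  intro x hx
  rw [h0 x hx.2, mul_zero]

open Filter Topology in
theorem TI.base {G K : Set (Pt n)} (hG : IsOpen G) (hK : IsCompact K)
    (hKG : K ⊆ G) {g h : Pt n → ℂ} {H : ℕ → Pt n → ℂ} (hg : L1locOn G g)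
    (hh : Continuous h) (h0 : ∀ x, x ∉ K → h x = 0)
    (hH : ∀ i, Continuous (H i)) (H0 : ∀ i x, x ∉ K → H i x = 0)
    {C : ℝ} (hC : ∀ i x, ‖H i x‖ ≤ C) (hlim : ∀ x, Tendsto (fun i => H i x) atTop (𝓝 (h x))) :
    TI G (fun i x => g x * H i x) (fun x => g x * h x) := by
  have hi : ∀ i, IntegrableOn (fun x => g x * H i x) G volume := fun i =>
    integrableOn_mul_of_supp hG hK hKG hg (hH i).continuousOn (H0 i)
  refine ⟨hi, integrableOn_mul_of_supp hG hK hKG hg hh.continuousOn h0, ?_⟩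
  have hgK : IntegrableOn (K.indicator fun x => C * ‖g x‖) G volume := by
    apply Integrable.integrableOn
    rw [integrable_indicator_iff hK.measurableSet]
    exact (hg.integrableOn_compact_subset hKG hK).norm.const_mul C
  refine tendsto_integral_of_dominated_convergence _ (fun i => (hi i).aestronglyMeasurable) hgK
    (fun i => Eventually.of_forall fun x => ?_)
    (Eventually.of_forall fun x => (hlim x).const_mul (g x))
  by_cases hx : x ∈ K
  · rw [Set.indicator_of_mem hx, norm_mul, mul_comm]
    exact mul_le_mul_of_nonneg_right (hC i x) (norm_nonneg _)
  · rw [Set.indicator_of_notMem hx, H0 i x hx, mul_zero, norm_zero]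

/-- The mollifiers. -/
def bump (n : ℕ) (r : ℝ) (hr : 0 < r) (i : ℕ) : ContDiffBump (0 : Pt n) where
  rIn := r / (i + 2) / 2
  rOut := r / (i + 2)
  rIn_pos := by positivity
  rIn_lt_rOut := by
    have : 0 < r / ((i : ℝ) + 2) := by positivity
    linarith

/-- Mollification. -/
def moll (r : ℝ) (hr : 0 < r) (i : ℕ) (h : Pt n → ℂ) : Pt n → ℂ :=
  MeasureTheory.convolution ((bump n r hr i).normed volume) h
    (ContinuousLinearMap.lsmul ℝ ℝ) volume

theorem bump_rOut_le (r : ℝ) (hr : 0 < r) (i : ℕ) : (bump n r hr i).rOut ≤ r := by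
  change r / ((i : ℝ) + 2) ≤ r
  apply div_le_self hr.le
  have : (0 : ℝ) ≤ i := Nat.cast_nonneg i
  linarith

open Filter Topology in
theorem bump_tendsto (r : ℝ) (hr : 0 < r) :
    Tendsto (fun i => (bump n r hr i).rOut) atTop (𝓝 0) := by
  change Tendsto (fun i : ℕ => r / ((i : ℝ) + 2)) atTop (𝓝 0)
  exact tendsto_const_nhds.div_atTop
    (tendsto_natCast_atTop_atTop.atTop_add tendsto_const_nhds)

theorem moll_zero_off (r : ℝ) (hr : 0 < r) (i : ℕ) {h : Pt n → ℂ} {K : Set (Pt n)}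
    (h0 : ∀ x, x ∉ K → h x = 0) (x : Pt n) (hx : x ∉ Metric.cthickening r K) :
    moll r hr i h x = 0 := by
  by_contra hne
  have h1 := support_convolution_subset_swap (ContinuousLinearMap.lsmul ℝ ℝ) (μ := volume)
    (f := (bump n r hr i).normed volume) (g := h) (show x ∈ Function.support _ from hne)
  obtain ⟨y, hy, z, hz, rfl⟩ := Set.mem_add.mp h1
  apply hx
  rw [ContDiffBump.support_normed_eq] at hz
  apply Metric.mem_cthickening_of_dist_le _ y
  · by_contra hyK
    exact hy (h0 y hyK)
  · rw [dist_eq_norm, add_sub_cancel_left]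
    exact (mem_ball_zero_iff.mp hz).le.trans (bump_rOut_le r hr i)

theorem moll_bound (r : ℝ) (hr : 0 < r) (i : ℕ) {h : Pt n → ℂ} (hh : Continuous h) {C : ℝ}
    (hC : ∀ x, ‖h x‖ ≤ C) (x : Pt n) : ‖moll r hr i h x‖ ≤ 3 * C := by
  have h1 : dist (moll r hr i h x) (h x) ≤ 2 * C := by
    apply ContDiffBump.dist_normed_convolution_le hh.aestronglyMeasurable
    intro y _
    rw [dist_eq_norm]
    linarith [norm_sub_le (h y) (h x), hC y, hC x]
  rw [dist_eq_norm] at h1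
  have h2 : ‖moll r hr i h x‖ ≤ ‖moll r hr i h x - h x‖ + ‖h x‖ := by
    simpa using norm_add_le (moll r hr i h x - h x) (h x)
  linarith [hC x]

theorem moll_smooth (r : ℝ) (hr : 0 < r) (i : ℕ) {h : Pt n → ℂ} (hh : Continuous h) :
    ContDiff ℝ (⊤ : ℕ∞) (moll r hr i h) :=
  (bump n r hr i).hasCompactSupport_normed.contDiff_convolution_left _
    (bump n r hr i).contDiff_normed hh.locallyIntegrable

theorem continuous_pd (j : Fin n) {h : Pt n → ℂ} (hh : ContDiff ℝ 1 h) : Continuous (pd j h) :=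
  (hh.continuous_fderiv one_ne_zero).clm_apply continuous_const

theorem pd_moll (r : ℝ) (hr : 0 < r) (i : ℕ) {h : Pt n → ℂ} (hh : ContDiff ℝ 1 h)
    (hc : HasCompactSupport h) (j : Fin n) : pd j (moll r hr i h) = moll r hr i (pd j h) := by
  funext x
  have hloc : LocallyIntegrable ((bump n r hr i).normed volume) volume :=
    (bump n r hr i).continuous_normed.locallyIntegrable
  have h1 := hc.hasFDerivAt_convolution_right (ContinuousLinearMap.lsmul ℝ ℝ) hloc hh x
  unfold pd moll
  rw [h1.fderiv]
  exact convolution_precompR_apply (ContinuousLinearMap.lsmul ℝ ℝ) hloc (hc.fderiv ℝ)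
    (hh.continuous_fderiv one_ne_zero) x _

theorem pd_zero_off (j : Fin n) {h : Pt n → ℂ} {K : Set (Pt n)} (hK : IsClosed K)
    (h0 : ∀ x, x ∉ K → h x = 0) (x : Pt n) (hx : x ∉ K) : pd j h x = 0 := by
  have : h =ᶠ[nhds x] fun _ => 0 := by
    filter_upwards [hK.isOpen_compl.mem_nhds hx] with y hy using h0 y hy
  unfold pd
  rw [this.fderiv_eq]
  simp

theorem TI.moll {G K : Set (Pt n)} (hG : IsOpen G) (hK : IsCompact K) (r : ℝ) (hr : 0 < r)
    (hKG : Metric.cthickening r K ⊆ G) {g h : Pt n → ℂ} (hg : L1locOn G g)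
    (hh : Continuous h) (h0 : ∀ x, x ∉ K → h x = 0) :
    TI G (fun i x => g x * moll r hr i h x) (fun x => g x * h x) := by
  have hc : HasCompactSupport h := HasCompactSupport.intro hK h0
  obtain ⟨C, hC⟩ := hc.exists_bound_of_continuous hh
  refine TI.base hG hK.cthickening hKG hg hh
    (fun x hx => h0 x fun hx' => hx (Metric.self_subset_cthickening K hx'))
    (fun i => (moll_smooth r hr i hh).continuous) (fun i x hx => moll_zero_off r hr i h0 x hx)
    (fun i x => moll_bound r hr i hh hC x)
    (fun x => ContDiffBump.convolution_tendsto_right_of_continuous (bump_tendsto r hr) hh x)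

theorem weak_C1 {G : Set (Pt n)} (hG : IsOpen G) {l : ℕ} {u f : Form n}
    (hu1 : ∀ S : Finset (Fin n), L1locOn G fun x => u x S)
    (hf1 : ∀ S : Finset (Fin n), L1locOn G fun x => f x S)
    (hδu : ∀ φ : Form n, TestFormOn G φ → (∀ x, IsGrade (l - 1) (φ x)) →
      ∫ x in G, ginner (f x) (φ x) = ∫ x in G, ginner (u x) (gd fun j => Dcl φ j x))
    {ψ : Form n} (hψ : ∀ S, ContDiff ℝ 1 fun x => ψ x S) {K : Set (Pt n)} (hK : IsCompact K)
    (hKG : K ⊆ G) (h0 : ∀ S x, x ∉ K → ψ x S = 0) :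
    IntegrableOn (fun x => ginner (f x) (ψ x)) G volume ∧
    IntegrableOn (fun x => ginner (u x) (gd fun j => Dcl ψ j x)) G volume ∧
    ((∀ x, IsGrade (l - 1) (ψ x)) →
      ∫ x in G, ginner (f x) (ψ x) = ∫ x in G, ginner (u x) (gd fun j => Dcl ψ j x)) := by
  obtain ⟨r, hr, hrG⟩ := hK.exists_cthickening_subset_open hG hKG
  have hc : ∀ S, HasCompactSupport fun x => ψ x S := fun S => HasCompactSupport.intro hK (h0 S)
  let Ψ : ℕ → Form n := fun i x S => moll r hr i (fun y => ψ y S) x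
  have t1 : TI G (fun i x => ginner (f x) (Ψ i x)) (fun x => ginner (f x) (ψ x)) :=
    TI.sum _ fun S _ => TI.moll hG hK r hr hrG (hf1 S) (hψ S).continuous (h0 S)
  have t2 : TI G (fun i x => ginner (u x) (gd fun j => Dcl (Ψ i) j x))
      (fun x => ginner (u x) (gd fun j => Dcl ψ j x)) := by
    simp only [ginner, gd, wedge, Finset.mul_sum]
    refine TI.sum _ fun S _ => TI.sum _ fun j _ => TI.sum _ fun I _ => ?_
    have := (TI.moll hG hK r hr hrG (hu1 S) (continuous_pd j (hψ (S \ I)))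
      (pd_zero_off j hK.isClosed (h0 (S \ I)))).const_mul (msgn I (S \ I) * dxe j I)
    have e : ∀ i x, Dcl (Ψ i) j x (S \ I) = moll r hr i (pd j fun y => ψ y (S \ I)) x := by
      intro i x
      rw [← pd_moll r hr i (hψ (S \ I)) (hc _) j]
      rfl
    convert this using 1
    · funext i x
      rw [e]; ring
    · funext x
      simp only [Dcl]; ring
  refine ⟨t1.2.1, t2.2.1, fun hgr => ?_⟩
  refine tendsto_nhds_unique t1.2.2 (t2.2.2.congr fun i => (hδu (Ψ i) ?_ ?_).symm)
  · intro S
    have hs : tsupport (fun x => Ψ i x S) ⊆ Metric.cthickening r K := by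
      refine closure_minimal ?_ Metric.isClosed_cthickening
      intro x hx
      by_contra hxK
      exact hx (moll_zero_off r hr i (h0 S) x hxK)
    exact ⟨moll_smooth r hr i (hψ S).continuous,
      hK.cthickening.of_isClosed_subset (isClosed_tsupport _) hs, hs.trans hrG⟩
  · intro x S hS
    have : (fun y => ψ y S) = fun _ => 0 := funext fun y => hgr y S hS
    change moll r hr i (fun y => ψ y S) x = 0
    rw [this]
    exact moll_zero_off r hr i (K := ∅) (fun _ _ => rfl) x (by simp)

theorem L1locOn.sum {G : Set (Pt n)} {ι : Type*} (s : Finset ι) {F : ι → Pt n → ℂ}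
    (h : ∀ a ∈ s, L1locOn G (F a)) : L1locOn G (fun x => ∑ a ∈ s, F a x) := by
  classical
  induction s using Finset.induction_on with
  | empty =>
    simp only [Finset.sum_empty]
    exact locallyIntegrableOn_zero
  | insert a s ha ih =>
    simp only [Finset.sum_insert ha]
    exact LocallyIntegrableOn.add (h a (Finset.mem_insert_self a s))
      (ih fun b hb => h b (Finset.mem_insert_of_mem hb))

theorem L1locOn.vee {G : Set (Pt n)} (hG : IsOpen G) {a w : Form n}
    (ha : ∀ S, ContinuousOn (fun x => a x S) G) (hw : ∀ S, L1locOn G fun x => w x S)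
    (S : Finset (Fin n)) : L1locOn G fun x => vee (a x) (w x) S := by
  refine L1locOn.sum _ fun J _ => ?_
  exact LocallyIntegrableOn.continuousOn_mul (hw (S ∪ J)) (continuousOn_const.mul (ha J))
    hG.isLocallyClosed

theorem continuousOn_pd {G : Set (Pt n)} (hG : IsOpen G) (j : Fin n) {h : Pt n → ℂ}
    (hh : ContDiffOn ℝ 1 h G) : ContinuousOn (pd j h) G :=
  (hh.continuousOn_fderiv_of_isOpen hG le_rfl).clm_apply continuousOn_const

theorem continuousOn_gd {G : Set (Pt n)} (hG : IsOpen G) {v : Form n}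
    (hv : ∀ S : Finset (Fin n), ContDiffOn ℝ 1 (fun x => v x S) G) (S : Finset (Fin n)) :
    ContinuousOn (fun x => gd (fun j => Dcl v j x) S) G := by
  refine continuousOn_finsetSum _ fun j _ => continuousOn_finsetSum _ fun I _ => ?_
  exact continuousOn_const.mul (continuousOn_pd hG j (hv (S \ I)))

theorem isGrade_Dcl {m : ℕ} {v : Form n} (hv : ∀ x, IsGrade m (v x)) (j : Fin n) (x : Pt n) :
    IsGrade m (Dcl v j x) := by
  intro S hS
  have : (fun y => v y S) = fun _ => 0 := funext fun y => hv y S hS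
  simp only [Dcl, this, pd]
  simp

theorem contDiff_mul_of_supp {G K : Set (Pt n)} (hG : IsOpen G) (hK : IsClosed K) (hKG : K ⊆ G)
    {a b : Pt n → ℂ} (ha : ContDiff ℝ 1 a) (h0 : ∀ x, x ∉ K → a x = 0)
    (hb : ContDiffOn ℝ 1 b G) : ContDiff ℝ 1 fun x => a x * b x := by
  rw [contDiff_iff_contDiffAt]
  intro x
  by_cases hx : x ∈ K
  · exact ha.contDiffAt.mul (hb.contDiffAt (hG.mem_nhds (hKG hx)))
  · have : (fun x => a x * b x) =ᶠ[nhds x] fun _ => 0 := by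
      filter_upwards [hK.isOpen_compl.mem_nhds hx] with y hy
      rw [h0 y hy, zero_mul]
    exact contDiffAt_const.congr_of_eventuallyEq this

theorem Dcl_wedge {a b : Form n} {x : Pt n}
    (ha : ∀ S, DifferentiableAt ℝ (fun y => a y S) x)
    (hb : ∀ S, DifferentiableAt ℝ (fun y => b y S) x) (j : Fin n) :
    Dcl (fun y => wedge (a y) (b y)) j x = wedge (Dcl a j x) (b x) + wedge (a x) (Dcl b j x) := by
  funext S
  have h1 : HasFDerivAt (fun y => wedge (a y) (b y) S)
      (∑ I ∈ S.powerset, ((msgn I (S \ I) * a x I) • fderiv ℝ (fun y => b y (S \ I)) x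
        + b x (S \ I) • (msgn I (S \ I) • fderiv ℝ (fun y => a y I) x))) x := by
    refine HasFDerivAt.fun_sum fun I _ => ?_
    exact ((ha I).hasFDerivAt.const_mul (msgn I (S \ I))).mul (hb (S \ I)).hasFDerivAt
  change fderiv ℝ (fun y => wedge (a y) (b y) S) x (Pi.single j 1) = _
  rw [h1.fderiv, _root_.sum_apply]
  simp only [Dcl, pd, wedge, Pi.add_apply, ← Finset.sum_add_distrib]
  refine Finset.sum_congr rfl fun I _ => ?_
  simp only [ContinuousLinearMap.add_apply, ContinuousLinearMap.smul_apply, smul_eq_mul]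
  ring

/-- Proposition A.3.  Let `u` be an `l`-form on `G` with components
in `L¹_loc(G)` possessing a weak coderivative `f = δu` with components in `L¹_loc(G)`,
and let `v` be a `C¹` `m`-form on `G`.  Then `v∨u` possesses a weak coderivative in
`L¹_loc(G)` and `δ(v∨u) = (−1)^{l−m} dv∨u + v∨δu` almost everywhere in `G`. -/
theorem statement13 (hn : 2 ≤ n) (G : Set (Pt n)) (hG : IsOpen G)
    (l m : ℕ) (hl : l ≤ n) (hm : m ≤ n) (u f : Form n)
    (hu1 : ∀ S : Finset (Fin n), L1locOn G fun x => u x S)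
    (hugr : ∀ x, IsGrade l (u x))
    (hf1 : ∀ S : Finset (Fin n), L1locOn G fun x => f x S)
    (hfgr : ∀ x, IsGrade (l - 1) (f x))
    (hδu : ∀ φ : Form n, TestFormOn G φ → (∀ x, IsGrade (l - 1) (φ x)) →
      ∫ x in G, ginner (f x) (φ x) = ∫ x in G, ginner (u x) (gd fun j => Dcl φ j x))
    (v : Form n) (hv : ∀ S : Finset (Fin n), ContDiffOn ℝ 1 (fun x => v x S) G)
    (hvgr : ∀ x, IsGrade m (v x)) :
    (∀ S : Finset (Fin n), L1locOn G fun x =>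
      ((-1 : ℂ) ^ (l - m) • vee (gd fun j => Dcl v j x) (u x) + vee (v x) (f x)) S) ∧
    ∀ φ : Form n, TestFormOn G φ → (∀ x, IsGrade (l - m - 1) (φ x)) →
      ∫ x in G, ginner
          ((-1 : ℂ) ^ (l - m) • vee (gd fun j => Dcl v j x) (u x) + vee (v x) (f x))
          (φ x)
        = ∫ x in G, ginner (vee (v x) (u x)) (gd fun j => Dcl φ j x) := by
  refine ⟨fun S => ?_, ?_⟩
  · exact LocallyIntegrableOn.add
      ((L1locOn.vee hG (continuousOn_gd hG hv) hu1 S).smul ((-1 : ℂ) ^ (l - m)))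
      (L1locOn.vee hG (fun S => (hv S).continuousOn) hf1 S)
  intro φ hφ hφgr
  have hφ1 : ∀ S, ContDiff ℝ 1 fun x => φ x S := fun S => (hφ S).1.of_le (by norm_cast)
  obtain ⟨K, hKdef⟩ : ∃ K : Set (Pt n), K = ⋃ S : Finset (Fin n), tsupport fun x => φ x S :=
    ⟨_, rfl⟩
  have hK : IsCompact K := hKdef ▸ isCompact_iUnion fun S => (hφ S).2.1
  have hKG : K ⊆ G := hKdef ▸ Set.iUnion_subset fun S => (hφ S).2.2
  have hφ0 : ∀ S x, x ∉ K → φ x S = 0 := by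
    intro S x hx
    by_contra hne
    apply hx
    rw [hKdef]
    exact Set.mem_iUnion.mpr ⟨S, subset_tsupport _ hne⟩
  obtain ⟨ψ, hψdef⟩ : ∃ ψ : Form n, ψ = fun x => wedge (φ x) (v x) := ⟨_, rfl⟩
  have hψ1 : ∀ S, ContDiff ℝ 1 fun x => ψ x S := by
    intro S
    simp only [hψdef, wedge, mul_assoc]
    exact ContDiff.sum fun I _ => contDiff_const.mul
      (contDiff_mul_of_supp hG hK.isClosed hKG (hφ1 I) (hφ0 I) (hv _))
  have hψ0 : ∀ S x, x ∉ K → ψ x S = 0 := by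
    intro S x hx
    simp only [hψdef, wedge]
    refine Finset.sum_eq_zero fun I _ => ?_
    rw [hφ0 I x hx]; ring
  have hψgr : ∀ x, IsGrade (l - m - 1 + m) (ψ x) := by
    intro x
    rw [hψdef]
    exact isGrade_wedge (hφgr x) (hvgr x)
  obtain ⟨i1, i2, heq⟩ := weak_C1 hG hu1 hf1 hδu hψ1 hK hKG hψ0
  have heq' : ∫ x in G, ginner (f x) (ψ x) = ∫ x in G, ginner (u x) (gd fun j => Dcl ψ j x) := by
    by_cases hd : l - m - 1 + m = l - 1
    · exact heq fun x => hd ▸ hψgr x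
    · have e1 : ∀ x, ginner (f x) (ψ x) = 0 := fun x =>
        ginner_grade (hfgr x) (hψgr x) (Ne.symm hd)
      have e2 : ∀ x, ginner (u x) (gd fun j => Dcl ψ j x) = 0 := fun x =>
        ginner_grade (hugr x) (isGrade_gd fun j => isGrade_Dcl hψgr j x) (by omega)
      simp only [e1, e2]
  have i3 : IntegrableOn (fun x => ginner (u x) (wedge (φ x) (gd fun j => Dcl v j x))) G volume := by
    simp only [ginner, wedge, Finset.mul_sum]
    refine integrable_finsetSum _ fun S _ => integrable_finsetSum _ fun I _ => ?_
    refine integrableOn_mul_of_supp hG hK hKG (hu1 S) ?_ ?_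
    · exact (continuousOn_const.mul (hφ1 I).continuous.continuousOn).mul
        (continuousOn_gd hG hv (S \ I))
    · intro x hx
      rw [hφ0 I x hx]; ring
  have hsign : ∀ x, (-1 : ℂ) ^ (l - m - 1) * ginner (u x) (wedge (φ x) (gd fun j => Dcl v j x))
      = -((-1 : ℂ) ^ (l - m) * ginner (u x) (wedge (φ x) (gd fun j => Dcl v j x))) := by
    intro x
    by_cases hlm : m < l
    · obtain ⟨k, hk⟩ : ∃ k, l - m = k + 1 := ⟨l - m - 1, by omega⟩
      rw [hk, Nat.add_sub_cancel, pow_succ]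
      ring
    · rw [ginner_grade (hugr x) (isGrade_wedge (hφgr x)
        (isGrade_gd fun j => isGrade_Dcl hvgr j x)) (by omega)]
      ring
  have hR : ∀ x ∈ G, ginner (vee (v x) (u x)) (gd fun j => Dcl φ j x)
      = ginner (u x) (gd fun j => Dcl ψ j x)
        + (-1 : ℂ) ^ (l - m) * ginner (u x) (wedge (φ x) (gd fun j => Dcl v j x)) := by
    intro x hx
    have hD : (fun j => Dcl ψ j x)
        = fun j => wedge (Dcl φ j x) (v x) + wedge (φ x) (Dcl v j x) := by
      funext j
      rw [hψdef]
      exact Dcl_wedge (fun S => (hφ1 S).differentiable one_ne_zero x)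
        (fun S => ((hv S).contDiffAt (hG.mem_nhds hx)).differentiableAt one_ne_zero) j
    rw [hD, gd_leibniz (φ x) (v x) (fun j => Dcl φ j x) (fun j => Dcl v j x) (hφgr x),
      ginner_add_right, ginner_smul_right, hsign, ginner_vee]
    ring
  have hL : ∀ x, ginner
      ((-1 : ℂ) ^ (l - m) • vee (gd fun j => Dcl v j x) (u x) + vee (v x) (f x)) (φ x)
      = ginner (f x) (ψ x)
        + (-1 : ℂ) ^ (l - m) * ginner (u x) (wedge (φ x) (gd fun j => Dcl v j x)) := by
    intro x
    rw [ginner_add_left, ginner_smul_left, ginner_vee, ginner_vee, hψdef, add_comm]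
  rw [setIntegral_congr_fun hG.measurableSet hR]
  simp only [hL]
  rw [integral_add i1 (i3.const_mul _), integral_add i2 (i3.const_mul _), heq']

end EMPaper
end
end
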